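/- Let R = x^32 - 4x^31 - 62x^30 + 558x^29 - 248x^28 - 23560x^27 + 143499x^26 + 59489x^25 - 4280108x^24 + 17190864x^23 + 12517459x^22 - 344750256x^21 + 1225662500x^20 - 278789479x^19 - 14790203106x^18 + 64357190741x^17 - 83774789980x^16 - 406418167694x^15 + 2480836111912x^14 - 5273524311353x^13 - 3257558862543x^12 + 54285321863574x^11 - 162450534558477x^10 + 197719989210108x^9 + 250865100757790x^8 - 1714511602191278x^7 + 4206562171750919x^6 - 6661579151098950x^5 + 7460752526582377x^4 - 5959749341609879x^3 + 3269911760551427x^2 - 1113936554991727x + 178725601175511 ∈ ℚ[x]. The Galois group of R over ℚ (i.e., the Galois group of its splitting field over ℚ) is isomorphic to PGL₂(F₃₁). -/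

import Mathlib

open Polynomial Matrix

noncomputable def R : Polynomial ℚ :=
  X^32 - 4*X^31 - 62*X^30 + 558*X^29 - 248*X^28 - 23560*X^27 + 143499*X^26 + 59489*X^25 - 4280108*X^24 + 17190864*X^23 + 12517459*X^22 - 344750256*X^21 + 1225662500*X^20 - 278789479*X^19 - 14790203106*X^18 + 64357190741*X^17 - 83774789980*X^16 - 406418167694*X^15 + 2480836111912*X^14 - 5273524311353*X^13 - 3257558862543*X^12 + 54285321863574*X^11 - 162450534558477*X^10 + 197719989210108*X^9 + 250865100757790*X^8 - 1714511602191278*X^7 + 4206562171750919*X^6 - 6661579151098950*X^5 + 7460752526582377*X^4 - 5959749341609879*X^3 + 3269911760551427*X^2 - 1113936554991727*X + 178725601175511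

def rcL : List ℤ := [178725601175511,
  -1113936554991727,
  3269911760551427,
  -5959749341609879,
  7460752526582377,
  -6661579151098950,
  4206562171750919,
  -1714511602191278,
  250865100757790,
  197719989210108,
  -162450534558477,
  54285321863574,
  -3257558862543,
  -5273524311353,
  2480836111912,
  -406418167694,
  -83774789980,
  64357190741,
  -14790203106,
  -278789479,
  1225662500,
  -344750256,
  12517459,
  17190864,
  -4280108,
  59489,
  143499,
  -23560,
  -248,
  558,
  -62,
  -4,
  1]

def rc (l : ℕ) : ℤ := rcL.getD l 0

def pp : ℕ := 198109
def kk : ℕ := 43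
def MM : ℕ := 584629665473829929284877440223366551974282478196253856373570371376360204192441769065359171846657436252293706630207094963475660885177670997698365034986314657779989505501990590682164179151370626792444599638142404625920806917883429

def rtL : List ℕ := [7766611064022970401714525059319683208769674710255535442535752351005933152181444581475077243675051388428779496651031116869990543961968145849706751372762386164351330238150217960573760225060429212421526331521372286269934009650061,
  42416436705634258284988375166875099499479824502628772793917218625805366331079845427534511769458907977783162017681724694139144522650235385888900993580687686097769715510984336813931328685222585866323725388702436639358142274796556,
  198804098375559905204986953360943193054068758034802427697236061648521663986126765211947556662739172553511128241587453268251566933728887167909194750973593616979631819158613615623558913920525263012884053251213428113733487473629405,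
  556887511928431565113891840994854490600369152720570260453770794226689826065749340239080751214361784518655263547150257081227573197310347955643597990607546730924655051013423728443467070622828659214713785623565369532439298059777186,
  493236599486080945900131601198309921821889514796816430964527777981498893922502925460069516005418329836605205632978304203968000107491611775082753285112886051379781938073067654517006060226204832192693536348692137230455114991496796,
  303140717431883411927070277580856056364901899136267778766805520735692118626468225247054994406355668470967546036828274495031264165622292962845647007229115781324693353302215746836527257933414592138282290146523661759135559880724080,
  456513694087811211564113107587180977072915363844201533758600661121905686976122885697344944877915518140823087676616341405204065603537686894874743774052550886693482153833615623491623614432879005694055450494391418374721289368361776,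
  128824326507131866534494038304953092598015026701571075639981546603712541166688807994228126358874687640690458272362495360971154463055478628577759221724341097267659419868603233426260567474616554020908517691871179074589590997857797,
  10948790134242282307041716726841135140809840127015884379522391527148173774872161369392593007089748970491108640957312451176216526599922302313059153605828748871618559421835871853347327488723883614013243725260254194036021884670916,
  513987689936927642396144723744599320862845816960646736580917337974531882167966782443086899417021777298606227720695987016741681950342013422327433026940184433396639414845245225638980659938799787809042028215206573204457213616373968,
  27291435723917064561329549340005886251060048015697853300933197912338079727987010349655454770365232942457414351568617300998692324828063209604761539893101031457145364022507425343515415013385897982998624551744942479024189609234526,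
  53141473651356900367179051237508238665720457629023251242515419042977228680956950102056405287676076180512590258458441840755283993055837563806964363193275179672782209045933234372063990391994667968125963635375553536507216860130809,
  134033846101611691169517953873608282849226855735282758533016876864173458648272567177108511393549066629838177709555941877617821283730899362955811841671892282483346884589352466731006190507689078986856317648999196247959245534370608,
  446300721009594979399712480830088401539402712083068891950985586198891462259626524745129212852723076780430159327268079700185387890212292408547556915472343557918764771465345863861204958402227955791828912901246323636883137951914934,
  290405107729512952413795692912241677451919657151765041361569062208592997313259802035986425017614425965443657813775627667719206228976241505775647118992959753480855542374307623828347518330733762612877537782321244289661896533937839,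
  5499255544151320243691478653856179065421681368955139743575198712737539153415339430848068060871279579272179547347205741296381161336079152700212455747674902016950800917352909056715408388204154786826746539798998500904742844372141,
  377748737690056084137542891556172556471764287455134920909638676116204168665520329762206845806277662562745771902860183691423105203379413608787637608329579723518796882048965978535753936030445706930668733529741246648415293718222459,
  248937303402393419840698681237617513194663877644471216999987494155010300099446015924423359443575149460585441263971714062743588623093353779709703733495202511871131178788895377481975862130612172201590024850587879216578782314562217,
  349128919593641712171690191866198558510899692460802855212661454283876446183327593496105439084256610690978525055267124188370613693181650605181449517295145840273648940645724107803527261530200682443165541572031202228545994225621053,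
  189798815789458499443029034248357102672852948734797566305712896934150595386745597810169900246006742218877394452490923979797648022342253607124695936614600619373997352608791364644905605329560665172536030499195599040713367565495468,
  545431495005015462102673994882289283891954990526278257138363012326465577057425923957898992645470057897694104270261369839647650318531868727023044869160497403606293583364894637542542419073386094298037669115808594252434624838769738,
  312447691248396543424494895670351004429711166575554572859804610816553852979447916206298093021162071110045150512582094051499287601059979841054472298106141654059273746890004353885362155913776568596952437157064818419467319383260801,
  392955443406688668784073753342199942798157648690121983028192116544766695048147181705551247407427641947584553054044600266435527250941093735283518923558715331668591651289306671297322841306076194635843693803936624738126234555625212,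
  343995131595277352545760330234236486281368522765280648798413201544185335649518426563659992691321511391590694891147373147234291221146831526784031966681908932380200209778891583440180792940479540272262696493044758737527416780953700,
  578987563908654345526790310235585870943872782803528378346336199614754678923055254915432635809313364450738051998842836526763286511361604172672790889350512911641196661274263378766228406491359436838622805275094830753022510709539546,
  440761025464064189780865597635067879193241302658645882932596127005494897712868113230467786455949899087447685102128025066009784963246582288347592206208202810461387503234437702609162285958682900467206228920791461962331223522512829,
  105156942505694611332906052446431776747026823723271737824004728238476360373983929860878395803152982740314302447625889058662943567635804163818176321523590280896061313293492961974594440202316713989254360998783699603121893307991647,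
  497399835411869413213268533625414459803910639247738250974106586228544574085660062861830358365183493519838933291649351246202123261104355045847445435273424788569028018514198202853060705832596377665609977962271288521695428275880749,
  407790911785327186177657333820130317877734592317748037066583577649829717127551711771444555818599081931787755886983545251503385469873429155628288945394634144340052394032421532215001006458728366918917153343350485112899604090746573,
  409058839040056730824655522422254985680037952621897675509024384320396816776119468057191133886050923657241108566817058245656403991362302937574241771203364698221471082391510121836178833595951001496709719926534224366872164831774258,
  264390872736806463745925233850030066504083917505344151137146899293522372937106669111345946558100322373008044547821663668889024217547220711187338686378421558692778021705932082201127048450645802530784719684449282534848677569276746,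
  220886803580007217716203319929485390540422221890876194324143573213308026119866732298843018158961660121705642547336671902618479350595134212445661261036347188775795220489564616029573223194600693316099540801158388777996293104602474]

def rt (a : ℕ) : ℕ := rtL.getD a 0

def s0 : ℕ := 14895019468768969163633431012915885005661093831731984659670001042975685286561471138667312615459492113768674038638405328563989941232007633282322032093137175200487836096951196951355364193212021300595800458815812485301992256226845

noncomputable def sumN (n : ℕ) (f : ℕ → ℕ) : ℕ := Nat.rec 0 (fun k ih => ih + f k) n

noncomputable def pwN (a k : ℕ) : ℕ := Nat.rec 1 (fun _ ih => ih * rt a % MM) k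

def rep1 (a : ℕ) : ℕ := bif Nat.beq a 31 then 1 else a
def rep2 (a : ℕ) : ℕ := bif Nat.beq a 31 then 0 else 1
def dN (a b : ℕ) : ℕ := rep1 a * rep2 b + 30 * (rep1 b * rep2 a)
def legN (n : ℕ) : ℕ := 3001272403999679892 / 4 ^ (n % 31) % 4
def chiN (a b c : ℕ) : ℕ := legN (dN a b * dN b c * dN c a)

def bw : ℕ := 2 ^ 2304

noncomputable def packN (n : ℕ) (f : ℕ → ℕ) : ℕ := sumN n (fun k => f k * bw ^ k)
noncomputable def wP (c : ℕ) : ℕ := packN 32 (fun k => pwN c k)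
noncomputable def wM (c : ℕ) : ℕ := packN 32 (fun k => MM - pwN c k)
noncomputable def sel (x : ℕ) (c : ℕ) : ℕ := bif Nat.beq x 1 then wP c else bif Nat.beq x 2 then wM c else 0
noncomputable def t1 (a b : ℕ) : ℕ := sumN 32 (fun c => sel (chiN a b c) c)
noncomputable def t2 (a j : ℕ) : ℕ := sumN 32 (fun b => pwN b j * t1 a b)
noncomputable def t3 (i j : ℕ) : ℕ := sumN 32 (fun a => pwN a i * t2 a j)
noncomputable def dig (i j k : ℕ) : ℕ := s0 * (t3 i j / bw ^ k % bw) % MM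
noncomputable def absJ (i j k : ℕ) : ℕ := bif Nat.ble (2 * dig i j k) MM then dig i j k else MM - dig i j k
noncomputable def cb (i : ℕ) : ℕ := sumN (32 - i) (fun l => (rc (i + 1 + l)).natAbs * 14 ^ l)
noncomputable def totJ : ℕ := sumN 32 (fun i => cb i * sumN 32 (fun j => cb j * sumN 32 (fun k => absJ i j k * cb k)))
noncomputable def dvb : ℕ := sumN 32 (fun l => (l + 1) * (rc (l + 1)).natAbs * 14 ^ l)

set_option maxRecDepth 100000 in
theorem totJ_lt : Nat.blt (totJ ^ 2 + 31 * dvb ^ 6) MM = true := by decide +kernel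


attribute [irreducible] MM rt s0 bw legN rc pwN t1 t2 t3 dig wP wM totJ dvb cb


theorem sumN_eq (n : ℕ) (f : ℕ → ℕ) : sumN n f = ∑ k ∈ Finset.range n, f k := by
  induction n with
  | zero => rfl
  | succ n ih => rw [Finset.sum_range_succ, ← ih]; rfl

theorem digit_extract (B : ℕ) (f : ℕ → ℕ) (hf : ∀ k, f k < B) (n k : ℕ) (hk : k < n) :
    (∑ l ∈ Finset.range n, f l * B ^ l) / B ^ k % B = f k := by
  have hB : 0 < B := lt_of_le_of_lt (Nat.zero_le _) (hf 0)
  have hlow : ∀ m, ∑ l ∈ Finset.range m, f l * B ^ l < B ^ m := by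
    intro m
    induction m with
    | zero => simp
    | succ m ih =>
      rw [Finset.sum_range_succ, pow_succ]
      have : f m + 1 ≤ B := hf m
      calc _ < B ^ m + f m * B ^ m := by omega
        _ = (f m + 1) * B ^ m := by ring
        _ ≤ B * B ^ m := Nat.mul_le_mul_right _ this
        _ = _ := by ring
  obtain ⟨d, rfl⟩ := Nat.exists_eq_add_of_lt hk
  have h1 : ∑ l ∈ Finset.range (k + d + 1), f l * B ^ l =
      (∑ l ∈ Finset.range k, f l * B ^ l) +
        B ^ k * (f k + B * ∑ l ∈ Finset.range d, f (k + 1 + l) * B ^ l) := by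
    rw [show k + d + 1 = k + (d + 1) by ring, Finset.sum_range_add, Finset.sum_range_succ']
    rw [mul_add, Finset.mul_sum, Finset.mul_sum]
    rw [add_comm (B ^ k * f k)]
    congr 1
    congr 1
    · apply Finset.sum_congr rfl
      intro l _
      rw [show k + (l + 1) = k + 1 + l by ring]; ring
    · simp [mul_comm]
  rw [h1, Nat.add_mul_div_left _ _ (pow_pos hB k), Nat.div_eq_of_lt (hlow k), zero_add,
    Nat.add_mul_mod_self_left, Nat.mod_eq_of_lt (hf k)]

theorem MM_pos : 1 < MM := by unfold MM; norm_num

theorem pwN_zero (a : ℕ) : pwN a 0 = 1 := by unfold pwN; rfl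
theorem pwN_succ (a k : ℕ) : pwN a (k + 1) = pwN a k * rt a % MM := by unfold pwN; rfl

theorem pwN_lt (a k : ℕ) : pwN a k < MM := by
  cases k with
  | zero => rw [pwN_zero]; exact MM_pos
  | succ k => rw [pwN_succ]; exact Nat.mod_lt _ (by have := MM_pos; omega)

theorem pwN_cast (a k : ℕ) : (pwN a k : ZMod MM) = (rt a : ZMod MM) ^ k := by
  induction k with
  | zero => simp [pwN_zero]
  | succ k ih =>
    rw [pwN_succ, ZMod.natCast_mod, Nat.cast_mul, ih, pow_succ]

noncomputable def uu (x c k : ℕ) : ℕ := bif Nat.beq x 1 then pwN c k else bif Nat.beq x 2 then MM - pwN c k else 0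

def sg (x : ℕ) : ℤ := bif Nat.beq x 1 then 1 else bif Nat.beq x 2 then -1 else 0

def chiZ (a b c : ℕ) : ℤ := sg (chiN a b c)

theorem uu_le (x c k : ℕ) : uu x c k ≤ MM := by
  unfold uu
  have := pwN_lt c k
  cases Nat.beq x 1 <;> cases Nat.beq x 2 <;> simp <;> omega

theorem uu_cast (x c k : ℕ) : (uu x c k : ZMod MM) = (sg x : ZMod MM) * (rt c : ZMod MM) ^ k := by
  unfold uu sg
  have := pwN_lt c k
  cases Nat.beq x 1 <;> cases Nat.beq x 2 <;>
    simp [pwN_cast, Nat.cast_sub this.le]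

theorem packN_eq (n : ℕ) (f : ℕ → ℕ) : packN n f = ∑ k ∈ Finset.range n, f k * bw ^ k := by
  unfold packN; rw [sumN_eq]

theorem sel_gen (B : ℕ) (f g : ℕ → ℕ) (b1 b2 : Bool) :
    (bif b1 then ∑ k ∈ Finset.range 32, f k * B ^ k else
      bif b2 then ∑ k ∈ Finset.range 32, g k * B ^ k else 0) =
    ∑ k ∈ Finset.range 32, (bif b1 then f k else bif b2 then g k else 0) * B ^ k := by
  cases b1 <;> cases b2 <;> simp

theorem sel_eq (x c : ℕ) : sel x c = ∑ k ∈ Finset.range 32, uu x c k * bw ^ k := by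
  unfold sel uu wP wM
  rw [packN_eq, packN_eq]
  exact sel_gen bw (fun k => pwN c k) (fun k => MM - pwN c k) _ _

noncomputable def vv (i j k : ℕ) : ℕ := ∑ a ∈ Finset.range 32, pwN a i *
  ∑ b ∈ Finset.range 32, pwN b j * ∑ c ∈ Finset.range 32, uu (chiN a b c) c k

theorem t3_gen (B : ℕ) (p q : ℕ → ℕ) (u : ℕ → ℕ → ℕ → ℕ → ℕ) :
    ∑ a ∈ Finset.range 32, p a * ∑ b ∈ Finset.range 32, q b *
      ∑ c ∈ Finset.range 32, ∑ k ∈ Finset.range 32, u a b c k * B ^ k =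
    ∑ k ∈ Finset.range 32, (∑ a ∈ Finset.range 32, p a * ∑ b ∈ Finset.range 32, q b *
      ∑ c ∈ Finset.range 32, u a b c k) * B ^ k := by
  simp only [Finset.mul_sum, Finset.sum_mul]
  symm
  rw [Finset.sum_comm]
  refine Finset.sum_congr rfl fun a _ => ?_
  rw [Finset.sum_comm]
  refine Finset.sum_congr rfl fun b _ => ?_
  rw [Finset.sum_comm]
  refine Finset.sum_congr rfl fun c _ => Finset.sum_congr rfl fun k _ => ?_
  ring

theorem t1_eq (a b : ℕ) : t1 a b = ∑ c ∈ Finset.range 32, ∑ k ∈ Finset.range 32,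
    uu (chiN a b c) c k * bw ^ k := by
  unfold t1; rw [sumN_eq]
  exact Finset.sum_congr rfl fun c _ => sel_eq _ _

theorem t2_eq (a j : ℕ) : t2 a j = ∑ b ∈ Finset.range 32, pwN b j * t1 a b := by
  unfold t2; rw [sumN_eq]

theorem t3_eq' (i j : ℕ) : t3 i j = ∑ a ∈ Finset.range 32, pwN a i * t2 a j := by
  unfold t3; rw [sumN_eq]

theorem t3_eq (i j : ℕ) : t3 i j = ∑ k ∈ Finset.range 32, vv i j k * bw ^ k := by
  rw [t3_eq']
  refine Eq.trans ?_ (t3_gen bw (fun a => pwN a i) (fun b => pwN b j)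
    (fun a b c k => uu (chiN a b c) c k))
  refine Finset.sum_congr rfl fun a _ => ?_
  rw [t2_eq]
  refine congrArg _ (Finset.sum_congr rfl fun b _ => ?_)
  rw [t1_eq]

theorem bw_gt : Nat.blt (32 * (MM * (32 * (MM * (32 * MM))))) bw = true := by decide +kernel

theorem vv_lt (i j k : ℕ) : vv i j k < bw := by
  have h1 : ∀ a b, ∑ c ∈ Finset.range 32, uu (chiN a b c) c k ≤ 32 * MM := by
    intro a b
    calc _ ≤ ∑ c ∈ Finset.range 32, MM := Finset.sum_le_sum fun c _ => uu_le _ _ _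
      _ = _ := by simp
  have h2 : ∀ a, ∑ b ∈ Finset.range 32, pwN b j * ∑ c ∈ Finset.range 32, uu (chiN a b c) c k
      ≤ 32 * (MM * (32 * MM)) := by
    intro a
    calc _ ≤ ∑ b ∈ Finset.range 32, MM * (32 * MM) :=
          Finset.sum_le_sum fun b _ => Nat.mul_le_mul (pwN_lt _ _).le (h1 _ _)
      _ = _ := by simp
  have h3 : vv i j k ≤ 32 * (MM * (32 * (MM * (32 * MM)))) := by
    calc _ ≤ ∑ b ∈ Finset.range 32, MM * (32 * (MM * (32 * MM))) :=
          Finset.sum_le_sum fun b _ => Nat.mul_le_mul (pwN_lt _ _).le (h2 _)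
      _ = _ := by simp
  refine lt_of_le_of_lt h3 ?_
  exact Nat.blt_eq.mp bw_gt

theorem vv_cast (i j k : ℕ) : (vv i j k : ZMod MM) = ∑ a ∈ Finset.range 32,
    ∑ b ∈ Finset.range 32, ∑ c ∈ Finset.range 32, (chiZ a b c : ZMod MM) *
      (rt a : ZMod MM) ^ i * (rt b : ZMod MM) ^ j * (rt c : ZMod MM) ^ k := by
  unfold vv chiZ
  push_cast
  simp only [pwN_cast, uu_cast, Finset.mul_sum]
  refine Finset.sum_congr rfl fun a _ => Finset.sum_congr rfl fun b _ =>
    Finset.sum_congr rfl fun c _ => ?_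
  ring

def ctr (M d : ℕ) : ℤ := bif Nat.ble (2 * d) M then (d : ℤ) else (d : ℤ) - M

theorem ctr_abs (M d : ℕ) (h : d < M) :
    |ctr M d| = ((bif Nat.ble (2 * d) M then d else M - d : ℕ) : ℤ) := by
  unfold ctr
  cases Nat.ble (2 * d) M
  · simp only [cond_false]
    rw [abs_of_neg (by omega)]; omega
  · simp

theorem ctr_cast (M d : ℕ) : (ctr M d : ZMod M) = d := by
  unfold ctr
  cases Nat.ble (2 * d) M <;> simp

noncomputable def JJ (i j k : ℕ) : ℤ := ctr MM (dig i j k)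

theorem dig_eq (i j k : ℕ) : dig i j k = s0 * (t3 i j / bw ^ k % bw) % MM := by
  unfold dig; rfl

theorem modlt (a b d : ℕ) (h : 1 < b) (hd : d = a % b) : d < b := by
  subst hd; exact Nat.mod_lt _ (by omega)

theorem JJ_abs (i j k : ℕ) : |JJ i j k| = absJ i j k := by
  unfold JJ absJ
  exact ctr_abs MM (dig i j k) (modlt _ _ _ MM_pos (dig_eq i j k))

theorem cast_gen (M s t v : ℕ) (d : ℕ) (hd : d = s * t % M) (ht : t = v) :
    (d : ZMod M) = (s : ZMod M) * (v : ZMod M) := by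
  subst hd ht; rw [ZMod.natCast_mod, Nat.cast_mul]

theorem JJ_cast (i j k : ℕ) (hk : k < 32) : (JJ i j k : ZMod MM) = (s0 : ZMod MM) *
    ∑ a ∈ Finset.range 32,
    ∑ b ∈ Finset.range 32, ∑ c ∈ Finset.range 32, (chiZ a b c : ZMod MM) *
      (rt a : ZMod MM) ^ i * (rt b : ZMod MM) ^ j * (rt c : ZMod MM) ^ k := by
  unfold JJ
  rw [ctr_cast, ← vv_cast]
  refine cast_gen _ _ _ _ _ (dig_eq i j k) ?_
  rw [t3_eq]
  exact digit_extract bw _ (vv_lt i j) 32 k hk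

section generic
variable {A : Type*} [CommRing A]

noncomputable def ev (x : A) : A := ∑ l ∈ Finset.range 33, (rc l : A) * x ^ l
noncomputable def cc (i : ℕ) (x : A) : A := ∑ l ∈ Finset.range (32 - i), (rc (i + 1 + l) : A) * x ^ l
noncomputable def dv (x : A) : A := ∑ l ∈ Finset.range 32, ((l + 1 : ℕ) : A) * (rc (l + 1) : A) * x ^ l
noncomputable def KK (x y : A) : A := ∑ i ∈ Finset.range 32, cc i x * y ^ i
noncomputable def FF (x y z : A) : A := ∑ i ∈ Finset.range 32, ∑ j ∈ Finset.range 32,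
  ∑ k ∈ Finset.range 32, (JJ i j k : A) * (cc i x * cc j y * cc k z)
noncomputable def EE (x y z : A) : A := FF x y z ^ 2 + 31 * (dv x * dv y * dv z) ^ 2

theorem KK_eq (x y : A) : KK x y = ∑ m ∈ Finset.range 32, (rc (m + 1) : A) *
    ∑ i ∈ Finset.range (m + 1), y ^ i * x ^ (m - i) := by
  unfold KK cc
  have := Finset.sum_range_diag_flip 32 (fun i l => (rc (i + l + 1) : A) * (y ^ i * x ^ l))
  rw [Finset.sum_congr rfl (fun i _ => Finset.sum_mul _ _ _)]
  rw [Finset.sum_congr rfl (fun m _ => Finset.mul_sum _ _ _)]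
  refine Eq.trans ?_ (this.symm.trans ?_)
  · refine Finset.sum_congr rfl fun i _ => Finset.sum_congr rfl fun l _ => ?_
    rw [show i + 1 + l = i + l + 1 by ring]; ring
  · refine Finset.sum_congr rfl fun m _ => Finset.sum_congr rfl fun i hi => ?_
    have : i < m + 1 := Finset.mem_range.mp hi
    rw [show i + (m - i) + 1 = m + 1 by omega]

theorem KK_mul (x y : A) : KK x y * (x - y) = ev x - ev y := by
  rw [KK_eq, Finset.sum_mul]
  unfold ev
  rw [← Finset.sum_sub_distrib, Finset.sum_range_succ' _ 32]
  simp only [pow_zero, sub_self, add_zero]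
  refine Finset.sum_congr rfl fun m _ => ?_
  have h := geom_sum₂_mul y x (m + 1)
  have h2 : (∑ i ∈ Finset.range (m + 1), y ^ i * x ^ (m + 1 - 1 - i)) =
    ∑ i ∈ Finset.range (m + 1), y ^ i * x ^ (m - i) := rfl
  rw [h2] at h
  linear_combination - (rc (m + 1) : A) * h

theorem KK_diag (x : A) : KK x x = dv x := by
  rw [KK_eq]; unfold dv
  refine Finset.sum_congr rfl fun m _ => ?_
  have : ∑ i ∈ Finset.range (m + 1), x ^ i * x ^ (m - i) =
      ∑ i ∈ Finset.range (m + 1), x ^ m := by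
    refine Finset.sum_congr rfl fun i hi => ?_
    have : i < m + 1 := Finset.mem_range.mp hi
    rw [← pow_add, show i + (m - i) = m by omega]
  rw [this, Finset.sum_const, Finset.card_range, nsmul_eq_mul]; ring

variable {B : Type*} [CommRing B]
theorem map_ev (f : A →+* B) (x : A) : f (ev x) = ev (f x) := by simp [ev]
theorem map_cc (f : A →+* B) (i : ℕ) (x : A) : f (cc i x) = cc i (f x) := by simp [cc]
theorem map_dv (f : A →+* B) (x : A) : f (dv x) = dv (f x) := by simp [dv]
theorem map_FF (f : A →+* B) (x y z : A) : f (FF x y z) = FF (f x) (f y) (f z) := by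
  simp only [FF, map_sum, map_mul, map_cc, map_intCast]
theorem map_EE (f : A →+* B) (x y z : A) : f (EE x y z) = EE (f x) (f y) (f z) := by
  simp only [EE, map_add, map_mul, map_pow, map_FF, map_dv, map_ofNat]

theorem FF_sum (s : A) (χ : ℕ → ℕ → ℕ → A) (r : ℕ → A)
    (hJ : ∀ i j k, k < 32 → (JJ i j k : A) = s * ∑ a ∈ Finset.range 32,
      ∑ b ∈ Finset.range 32, ∑ c ∈ Finset.range 32, χ a b c * r a ^ i * r b ^ j * r c ^ k)
    (x y z : A) : FF x y z = s * ∑ a ∈ Finset.range 32,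
      ∑ b ∈ Finset.range 32, ∑ c ∈ Finset.range 32, χ a b c * (KK x (r a) * KK y (r b) * KK z (r c)) := by
  have h1 : FF x y z = ∑ i ∈ Finset.range 32, ∑ j ∈ Finset.range 32, ∑ k ∈ Finset.range 32,
      ∑ a ∈ Finset.range 32, ∑ b ∈ Finset.range 32, ∑ c ∈ Finset.range 32,
      s * (χ a b c * (cc i x * r a ^ i * (cc j y * r b ^ j) * (cc k z * r c ^ k))) := by
    unfold FF
    refine Finset.sum_congr rfl fun i _ => Finset.sum_congr rfl fun j _ =>
      Finset.sum_congr rfl fun k hk => ?_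
    rw [hJ i j k (Finset.mem_range.mp hk)]
    simp only [Finset.mul_sum, Finset.sum_mul]
    refine Finset.sum_congr rfl fun a _ => Finset.sum_congr rfl fun b _ =>
      Finset.sum_congr rfl fun c _ => ?_
    ring
  have h2 : ∀ a b c, KK x (r a) * KK y (r b) * KK z (r c) = ∑ i ∈ Finset.range 32,
      ∑ j ∈ Finset.range 32, ∑ k ∈ Finset.range 32,
        (cc i x * r a ^ i * (cc j y * r b ^ j) * (cc k z * r c ^ k)) := by
    intro a b c
    unfold KK
    rw [Finset.sum_mul_sum, Finset.sum_mul]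
    refine Finset.sum_congr rfl fun i _ => ?_
    rw [Finset.sum_mul]
    refine Finset.sum_congr rfl fun j _ => ?_
    rw [Finset.mul_sum]
  rw [h1]
  simp only [h2, Finset.mul_sum]
  have swap1 : ∀ g : ℕ → ℕ → ℕ → ℕ → A, ∑ i ∈ Finset.range 32, ∑ a ∈ Finset.range 32,
      ∑ b ∈ Finset.range 32, ∑ c ∈ Finset.range 32, g i a b c = ∑ a ∈ Finset.range 32,
      ∑ b ∈ Finset.range 32, ∑ c ∈ Finset.range 32, ∑ i ∈ Finset.range 32, g i a b c := by
    intro g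
    rw [Finset.sum_comm]
    refine Finset.sum_congr rfl fun a _ => ?_
    rw [Finset.sum_comm]
    refine Finset.sum_congr rfl fun b _ => ?_
    rw [Finset.sum_comm]
  rw [← swap1]
  refine Finset.sum_congr rfl fun i _ => ?_
  rw [← swap1]
  refine Finset.sum_congr rfl fun j _ => ?_
  rw [← swap1]

theorem FF_root (s : A) (χ : ℕ → ℕ → ℕ → A) (r : ℕ → A)
    (hJ : ∀ i j k, k < 32 → (JJ i j k : A) = s * ∑ a ∈ Finset.range 32,
      ∑ b ∈ Finset.range 32, ∑ c ∈ Finset.range 32, χ a b c * r a ^ i * r b ^ j * r c ^ k)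
    (hr : ∀ a, a < 32 → ev (r a) = 0)
    (hu : ∀ a b, a < 32 → b < 32 → a ≠ b → IsUnit (r a - r b))
    (a b c : ℕ) (ha : a < 32) (hb : b < 32) (hc : c < 32) :
    FF (r a) (r b) (r c) = s * χ a b c * (dv (r a) * dv (r b) * dv (r c)) := by
  have hK : ∀ a b, a < 32 → b < 32 → b ≠ a → KK (r a) (r b) = 0 := by
    intro a b ha hb hab
    have := KK_mul (r a) (r b)
    rw [hr a ha, hr b hb, sub_self] at this
    exact (hu a b ha hb hab.symm).mul_left_eq_zero.mp this
  rw [FF_sum s χ r hJ]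
  rw [Finset.sum_eq_single a, Finset.sum_eq_single b, Finset.sum_eq_single c,
    KK_diag, KK_diag, KK_diag]
  · ring
  · intro c' hc' h; rw [hK c c' hc (Finset.mem_range.mp hc') h]; ring
  · intro h; exact absurd (Finset.mem_range.mpr hc) h
  · intro b' hb' h
    refine Finset.sum_eq_zero fun c' _ => ?_
    rw [hK b b' hb (Finset.mem_range.mp hb') h]; ring
  · intro h; exact absurd (Finset.mem_range.mpr hb) h
  · intro a' ha' h
    refine Finset.sum_eq_zero fun b' _ => Finset.sum_eq_zero fun c' _ => ?_
    rw [hK a a' ha (Finset.mem_range.mp ha') h]; ring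
  · intro h; exact absurd (Finset.mem_range.mpr ha) h

end generic

theorem pp_prime : Nat.Prime pp := by unfold pp; norm_num
instance : Fact (Nat.Prime pp) := ⟨pp_prime⟩
theorem MM_eq : MM = pp ^ 43 := by
  have : Nat.beq MM (pp ^ 43) = true := by decide +kernel
  exact Nat.eq_of_beq_eq_true this

noncomputable def allN (n : ℕ) (f : ℕ → Bool) : Bool := Nat.rec true (fun k ih => and ih (f k)) n
theorem allN_spec (n : ℕ) (f : ℕ → Bool) (h : allN n f = true) (k : ℕ) (hk : k < n) : f k = true := by
  induction n with
  | zero => omega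
  | succ n ih =>
    have h' : (allN n f && f n) = true := h
    rw [Bool.and_eq_true] at h'
    rcases Nat.lt_succ_iff_lt_or_eq.mp hk with h1 | rfl
    · exact ih h'.1 h1
    · exact h'.2

theorem chk_rt : allN 32 (fun a => Nat.beq (sumN 33 (fun l => (rc l).toNat * pwN a l) % MM)
    (sumN 33 (fun l => (-rc l).toNat * pwN a l) % MM)) = true := by decide +kernel

theorem chk_dist : allN 32 (fun a => allN 32 (fun b => or (Nat.beq a b)
    (not (Nat.beq (rt a % pp) (rt b % pp))))) = true := by decide +kernel

theorem chk_s : Nat.beq ((s0 ^ 2 + 31) % MM) 0 = true := by decide +kernel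

theorem chk_chi : allN 32 (fun a => allN 32 (fun b => allN 32 (fun c =>
    or (or (Nat.beq a b) (or (Nat.beq a c) (Nat.beq b c)))
    (or (Nat.beq (chiN a b c) 1) (Nat.beq (chiN a b c) 2))))) = true := by decide +kernel

theorem beq_ne {a b : ℕ} (h : a ≠ b) : Nat.beq a b = false :=
  Bool.eq_false_iff.mpr (fun h' => h (Nat.eq_of_beq_eq_true h'))

theorem ev_gen (n M : ℕ) (c : ℕ → ℤ) (x : ZMod M) (pw : ℕ → ℕ) (hp : ∀ l, (pw l : ZMod M) = x ^ l)
    (h : Nat.beq (sumN n (fun l => (c l).toNat * pw l) % M)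
      (sumN n (fun l => (-c l).toNat * pw l) % M) = true) :
    ∑ l ∈ Finset.range n, (c l : ZMod M) * x ^ l = 0 := by
  have h0 := Nat.eq_of_beq_eq_true h
  rw [sumN_eq, sumN_eq] at h0
  have h2 := (ZMod.natCast_eq_natCast_iff' _ _ M).mpr h0
  rw [Nat.cast_sum, Nat.cast_sum] at h2
  simp only [Nat.cast_mul, hp] at h2
  rw [← sub_eq_zero, ← Finset.sum_sub_distrib] at h2
  rw [← h2]
  refine Finset.sum_congr rfl fun l _ => ?_
  rw [← sub_mul]
  congr 1
  have := congrArg (Int.cast : ℤ → ZMod M) (Int.toNat_sub_toNat_neg (c l))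
  rw [Int.cast_sub, Int.cast_natCast, Int.cast_natCast] at this
  exact this.symm

theorem rt_ev (a : ℕ) (ha : a < 32) : ev (rt a : ZMod MM) = 0 :=
  ev_gen 33 MM rc (rt a) (pwN a) (pwN_cast a) (allN_spec _ _ chk_rt a ha)

theorem rt_ne (a b : ℕ) (ha : a < 32) (hb : b < 32) (h : a ≠ b) : rt a % pp ≠ rt b % pp := by
  have := allN_spec _ _ (allN_spec _ _ chk_dist a ha) b hb
  intro h2
  rw [h2, beq_ne h] at this
  simp at this

theorem rt_unit (a b : ℕ) (ha : a < 32) (hb : b < 32) (h : a ≠ b) :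
    IsUnit ((rt a : ZMod MM) - rt b) := by
  have h1 : ((rt a : ZMod MM) - rt b) = (((rt a : ℤ) - rt b : ℤ) : ZMod MM) := by push_cast; rfl
  rw [h1, ZMod.coe_int_isUnit_iff_isCoprime]
  have h2 : (MM : ℤ) = (pp : ℤ) ^ 43 := by rw [MM_eq, Nat.cast_pow]
  rw [h2]
  apply IsCoprime.pow_left
  rw [(Nat.prime_iff_prime_int.mp pp_prime).coprime_iff_not_dvd]
  intro h3
  apply rt_ne a b ha hb h
  have := (Int.emod_emod_of_dvd (rt a) (dvd_refl (pp : ℤ)))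
  have h4 : (rt b : ℤ) ≡ rt a [ZMOD pp] := (Int.modEq_iff_dvd).mpr h3
  exact ((Int.natCast_modEq_iff).mp h4).symm

theorem s0_sq : (s0 : ZMod MM) ^ 2 = -31 := by
  have h := Nat.eq_of_beq_eq_true chk_s
  have h2 : ((s0 ^ 2 + 31 : ℕ) : ZMod MM) = 0 := (ZMod.natCast_eq_zero_iff _ _).mpr (Nat.dvd_of_mod_eq_zero h)
  push_cast at h2
  linear_combination h2

theorem chiZ_pm (a b c : ℕ) (ha : a < 32) (hb : b < 32) (hc : c < 32) (hab : a ≠ b) (hac : a ≠ c)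
    (hbc : b ≠ c) : chiZ a b c = 1 ∨ chiZ a b c = -1 := by
  have := allN_spec _ _ (allN_spec _ _ (allN_spec _ _ chk_chi a ha) b hb) c hc
  rw [beq_ne hab, beq_ne hac, beq_ne hbc] at this
  simp only [Bool.or_false, Bool.false_or, Bool.or_eq_true] at this
  unfold chiZ sg
  rcases this with h | h
  · left; rw [h]; rfl
  · right
    have : Nat.beq (chiN a b c) 1 = false := by
      rw [Nat.eq_of_beq_eq_true h]; rfl
    rw [this, h]; rfl

theorem FF_rt (a b c : ℕ) (ha : a < 32) (hb : b < 32) (hc : c < 32) :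
    FF (rt a : ZMod MM) (rt b) (rt c) = s0 * (chiZ a b c : ZMod MM) *
      (dv (rt a : ZMod MM) * dv (rt b : ZMod MM) * dv (rt c : ZMod MM)) :=
  FF_root (s0 : ZMod MM) (fun a b c => (chiZ a b c : ZMod MM)) (fun a => (rt a : ZMod MM))
    (fun i j k hk => JJ_cast i j k hk) rt_ev rt_unit a b c ha hb hc

theorem EE_rt (a b c : ℕ) (ha : a < 32) (hb : b < 32) (hc : c < 32) (hab : a ≠ b) (hac : a ≠ c)
    (hbc : b ≠ c) : EE (rt a : ZMod MM) (rt b) (rt c) = 0 := by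
  unfold EE
  rw [FF_rt a b c ha hb hc]
  have h : (chiZ a b c : ZMod MM) ^ 2 = 1 := by
    rcases chiZ_pm a b c ha hb hc hab hac hbc with h | h <;> rw [h] <;> simp
  have := s0_sq
  linear_combination (dv (rt a : ZMod MM) * dv (rt b : ZMod MM) * dv (rt c : ZMod MM)) ^ 2 *
    ((s0 : ZMod MM) ^ 2 * h + this)

noncomputable def RZ : ℤ[X] := ∑ l ∈ Finset.range 33, C (rc l) * X ^ l

theorem rc_eq (l : ℕ) : rc l = rcL.getD l 0 := by unfold rc; rfl

theorem RZ_map : R = RZ.map (Int.castRingHom ℚ) := by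
  unfold RZ R
  simp only [Finset.sum_range_succ, Finset.sum_range_zero, rc_eq, rcL, List.getD_cons_zero,
    List.getD_cons_succ, Polynomial.map_add, Polynomial.map_mul, Polynomial.map_pow, map_X, map_C,
    eq_intCast, Polynomial.map_zero]
  simp only [Int.cast_neg, Int.cast_ofNat, Int.cast_one, Polynomial.map_neg, Polynomial.map_ofNat, Polynomial.map_one]
  ring

theorem aeval_RZ {A : Type*} [CommRing A] (x : A) : aeval x RZ = ev x := by
  simp [RZ, ev]

theorem aeval_RZ' {A : Type*} [CommRing A] (x : A) : aeval x (derivative RZ) = dv x := by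
  rw [RZ, dv, derivative_sum, map_sum, Finset.sum_range_succ']
  simp only [derivative_C_mul_X_pow, map_mul, aeval_C, map_pow, aeval_X]
  simp
  refine Finset.sum_congr rfl fun l _ => ?_
  ring

theorem aeval_R {A : Type*} [CommRing A] [Algebra ℚ A] (x : A) : aeval x R = ev x := by
  rw [RZ_map, ← aeval_RZ, aeval_def, eval₂_map, aeval_def]
  congr 1
  exact RingHom.ext_int _ _

theorem RZ_monic : RZ.Monic := by
  unfold RZ
  rw [Finset.sum_range_succ]
  have : rc 32 = 1 := by rw [rc_eq]; rfl
  rw [this, C_1, one_mul, add_comm]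
  apply monic_X_pow_add
  refine lt_of_le_of_lt (degree_sum_le _ _) ?_
  refine (Finset.sup_lt_iff (by exact WithBot.bot_lt_coe 32)).mpr fun l hl => ?_
  refine lt_of_le_of_lt (degree_C_mul_X_pow_le _ _) ?_
  exact_mod_cast Finset.mem_range.mp hl

theorem RZ_deg : RZ.natDegree = 32 := by
  have h1 : RZ.natDegree ≤ 32 := by
    unfold RZ
    refine natDegree_sum_le_of_forall_le _ _ fun l hl => ?_
    refine (natDegree_C_mul_X_pow_le _ _).trans ?_
    have := Finset.mem_range.mp hl; omega
  refine le_antisymm h1 (le_natDegree_of_ne_zero ?_)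
  unfold RZ
  rw [finsetSum_coeff]
  simp only [coeff_C_mul, coeff_X_pow]
  rw [Finset.sum_eq_single 32]
  · rw [rc_eq]; simp [rcL]
  · intro b _ hb; simp [hb.symm]
  · simp

theorem R_monic : R.Monic := by rw [RZ_map]; exact RZ_monic.map _
theorem R_deg : R.natDegree = 32 := by rw [RZ_map, RZ_monic.natDegree_map, RZ_deg]
theorem R_ne : R ≠ 0 := R_monic.ne_zero

theorem chk_dv : allN 32 (fun a => not (Nat.beq
    (sumN 32 (fun l => (l + 1) * (rc (l + 1)).toNat * pwN a l) % pp)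
    (sumN 32 (fun l => (l + 1) * (-rc (l + 1)).toNat * pwN a l) % pp))) = true := by decide +kernel

theorem dvu_gen (n M p : ℕ) (hp : p.Prime) (hM : M = p ^ 43) (c : ℕ → ℤ) (x : ZMod M) (pw : ℕ → ℕ) (hpw : ∀ l, (pw l : ZMod M) = x ^ l)
    (h : not (Nat.beq (sumN n (fun l => (l + 1) * (c (l + 1)).toNat * pw l) % p)
      (sumN n (fun l => (l + 1) * (-c (l + 1)).toNat * pw l) % p)) = true) :
    IsUnit (∑ l ∈ Finset.range n, ((l + 1 : ℕ) : ZMod M) * (c (l + 1) : ZMod M) * x ^ l) := by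
  have h1 : (∑ l ∈ Finset.range n, ((l + 1 : ℕ) : ZMod M) * (c (l + 1) : ZMod M) * x ^ l) =
      ((((∑ l ∈ Finset.range n, (l + 1) * (c (l + 1)).toNat * pw l : ℕ) : ℤ) -
       ((∑ l ∈ Finset.range n, (l + 1) * (-c (l + 1)).toNat * pw l : ℕ) : ℤ) : ℤ) : ZMod M) := by
    rw [Int.cast_sub, Int.cast_natCast, Int.cast_natCast, Nat.cast_sum, Nat.cast_sum,
      ← Finset.sum_sub_distrib]
    refine Finset.sum_congr rfl fun l _ => ?_
    have := congrArg (Int.cast : ℤ → ZMod M) (Int.toNat_sub_toNat_neg (c (l + 1)))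
    rw [Int.cast_sub, Int.cast_natCast, Int.cast_natCast] at this
    rw [Nat.cast_mul, Nat.cast_mul, Nat.cast_mul, Nat.cast_mul, hpw, ← this]
    ring
  rw [h1, ZMod.coe_int_isUnit_iff_isCoprime]
  have h2 : (M : ℤ) = (p : ℤ) ^ 43 := by rw [hM, Nat.cast_pow]
  rw [h2]
  apply IsCoprime.pow_left
  rw [(Nat.prime_iff_prime_int.mp hp).coprime_iff_not_dvd]
  intro h3
  have h4 := (Int.natCast_modEq_iff).mp ((Int.modEq_iff_dvd).mpr h3)
  rw [sumN_eq, sumN_eq, show _ % p = _ % p from h4, Nat.beq_refl] at h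
  simp at h

theorem dv_unit (a : ℕ) (ha : a < 32) : IsUnit (dv (rt a : ZMod MM)) :=
  dvu_gen 32 MM pp pp_prime MM_eq rc (rt a) (pwN a) (pwN_cast a) (allN_spec _ _ chk_dv a ha)

-- transport to ZMod (pp ^ N)
theorem dv_unit' (M : ℕ) (h : M = MM) (a : ℕ) (ha : a < 32) : IsUnit (dv (rt a : ZMod M)) := by
  subst h; exact dv_unit a ha
theorem rt_ev' (M : ℕ) (h : M = MM) (a : ℕ) (ha : a < 32) : ev (rt a : ZMod M) = 0 := by
  subst h; exact rt_ev a ha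
theorem rt_unit' (M : ℕ) (h : M = MM) (a b : ℕ) (ha : a < 32) (hb : b < 32) (hab : a ≠ b) :
    IsUnit ((rt a : ZMod M) - rt b) := by
  subst h; exact rt_unit a b ha hb hab
theorem EE_rt' (M : ℕ) (h : M = MM) (a b c : ℕ) (ha : a < 32) (hb : b < 32) (hc : c < 32) (hab : a ≠ b) (hac : a ≠ c)
    (hbc : b ≠ c) : EE (rt a : ZMod M) (rt b) (rt c) = 0 := by
  subst h; exact EE_rt a b c ha hb hc hab hac hbc
theorem FF_rt' (M : ℕ) (h : M = MM) (a b c : ℕ) (ha : a < 32) (hb : b < 32) (hc : c < 32) :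
    FF (rt a : ZMod M) (rt b) (rt c) = s0 * (chiZ a b c : ZMod M) *
      (dv (rt a : ZMod M) * dv (rt b : ZMod M) * dv (rt c : ZMod M)) := by
  subst h; exact FF_rt a b c ha hb hc

theorem unit_of_toZMod {p : ℕ} [Fact p.Prime] (N : ℕ) (hN : 0 < N) (x : ℤ_[p])
    (h : IsUnit (PadicInt.toZModPow N x)) : IsUnit x := by
  by_contra hx
  rw [PadicInt.isUnit_iff] at hx
  have h1 : ‖x‖ < 1 := lt_of_le_of_ne (PadicInt.norm_le_one x) hx
  rw [PadicInt.norm_lt_one_iff_dvd] at h1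
  have h2 := map_dvd (PadicInt.toZModPow (p := p) N) h1
  rw [map_natCast] at h2
  have h3 : IsUnit ((p : ℕ) : ZMod (p ^ N)) := isUnit_of_dvd_unit h2 h
  rw [ZMod.isUnit_iff_coprime] at h3
  have hp : p.Prime := Fact.out
  have := (Nat.coprime_pow_right_iff hN p p).mp h3
  rw [Nat.coprime_self] at this
  exact hp.one_lt.ne' this

theorem exZ_gen {p : ℕ} [Fact p.Prime] (N : ℕ) (hN : 0 < N) (r : ℕ)
    (h1 : ev (r : ZMod (p ^ N)) = 0) (h2 : IsUnit (dv (r : ZMod (p ^ N)))) :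
    ∃ z : ℤ_[p], ev z = 0 ∧ PadicInt.toZModPow N z = (r : ZMod (p ^ N)) := by
  have hd : IsUnit (dv (r : ℤ_[p])) := by
    apply unit_of_toZMod N hN
    rw [map_dv, map_natCast]; exact h2
  have he : PadicInt.toZModPow N (ev (r : ℤ_[p])) = 0 := by
    rw [map_ev, map_natCast]; exact h1
  have hdn := PadicInt.isUnit_iff.mp hd
  have hen : (p : ℤ_[p]) ^ N ∣ ev (r : ℤ_[p]) := by
    rw [← RingHom.mem_ker, PadicInt.ker_toZModPow, Ideal.mem_span_singleton] at he
    exact he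
  have hn : ‖aeval (r : ℤ_[p]) RZ‖ < ‖aeval (r : ℤ_[p]) (derivative RZ)‖ ^ 2 := by
    rw [aeval_RZ, aeval_RZ', hdn, one_pow, PadicInt.norm_lt_one_iff_dvd]
    exact (dvd_pow_self _ hN.ne').trans hen
  obtain ⟨z, hz, hz2, -⟩ := hensels_lemma hn
  rw [aeval_RZ', hdn, PadicInt.norm_lt_one_iff_dvd] at hz2
  rw [aeval_RZ] at hz
  refine ⟨z, hz, ?_⟩
  have hK : IsUnit (KK z (r : ℤ_[p])) := by
    rw [← IsUnit.neg_iff]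
    by_contra hx
    rw [PadicInt.isUnit_iff] at hx
    have h3 : ‖-KK z (r : ℤ_[p])‖ < 1 := lt_of_le_of_ne (PadicInt.norm_le_one _) hx
    rw [PadicInt.norm_lt_one_iff_dvd] at h3
    have h3 := (dvd_neg.mp h3)
    have h4 : (p : ℤ_[p]) ∣ KK z (r : ℤ_[p]) - dv (r : ℤ_[p]) := by
      rw [← KK_diag]
      refine hz2.trans ?_
      unfold KK
      rw [← Finset.sum_sub_distrib]
      refine Finset.dvd_sum fun i _ => ?_
      rw [← sub_mul]
      refine Dvd.dvd.mul_right ?_ _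
      unfold cc
      rw [← Finset.sum_sub_distrib]
      refine Finset.dvd_sum fun l _ => ?_
      rw [← mul_sub]
      exact Dvd.dvd.mul_left (sub_dvd_pow_sub_pow _ _ _) _
    have h5 : (p : ℤ_[p]) ∣ dv (r : ℤ_[p]) := by
      have := dvd_sub h3 h4; simpa using this
    rw [← PadicInt.norm_lt_one_iff_dvd, hdn] at h5
    exact lt_irrefl _ h5
  have h6 := KK_mul z (r : ℤ_[p])
  rw [hz, zero_sub] at h6
  have h7 : (p : ℤ_[p]) ^ N ∣ z - r := by
    have : (p : ℤ_[p]) ^ N ∣ KK z (r : ℤ_[p]) * (z - r) := by rw [h6]; exact (dvd_neg).mpr hen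
    exact (hK.dvd_mul_left).mp this
  rw [← Ideal.mem_span_singleton, ← PadicInt.ker_toZModPow, RingHom.mem_ker, map_sub, sub_eq_zero,
    map_natCast] at h7
  exact h7

theorem exZ (N : ℕ) (hN : N = 43) : ∃ z : ℕ → ℤ_[pp], ∀ a, a < 32 → ev (z a) = 0 ∧
    PadicInt.toZModPow N (z a) = (rt a : ZMod (pp ^ N)) := by
  have hM : pp ^ N = MM := by rw [hN]; exact MM_eq.symm
  have h : ∀ a, ∃ z : ℤ_[pp], a < 32 → ev z = 0 ∧
    PadicInt.toZModPow N z = (rt a : ZMod (pp ^ N)) := by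
    intro a
    by_cases ha : a < 32
    · obtain ⟨z, hz⟩ := exZ_gen (p := pp) N (by omega) (rt a) (rt_ev' _ hM a ha) (dv_unit' _ hM a ha)
      exact ⟨z, fun _ => hz⟩
    · exact ⟨0, fun h => absurd h ha⟩
  choose z hz using h
  exact ⟨z, hz⟩

theorem chk_14 : Nat.blt (sumN 32 (fun l => (rc l).natAbs * 14 ^ l)) (14 ^ 32) = true := by decide +kernel

theorem abs_rc (l : ℕ) : ‖((rc l : ℤ) : ℂ)‖ = ((rc l).natAbs : ℝ) := by
  rw [Complex.norm_intCast, Nat.cast_natAbs, Int.cast_abs]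

theorem root_bound (x : ℂ) (hx : ev x = 0) : ‖x‖ ≤ 14 := by
  by_contra h
  push Not at h
  have hS := Nat.blt_eq.mp chk_14
  rw [sumN_eq] at hS
  have hS' : (∑ l ∈ Finset.range 32, ((rc l).natAbs : ℝ) * 14 ^ l) < 14 ^ 32 := by exact_mod_cast hS
  set t := ‖x‖ / 14 with ht
  have ht1 : 1 ≤ t := by rw [ht, le_div_iff₀ (by norm_num)]; linarith
  have hxt : ‖x‖ = 14 * t := by rw [ht]; ring
  unfold ev at hx
  rw [Finset.sum_range_succ, show rc 32 = 1 by rw [rc_eq]; rfl] at hx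
  have h1 : x ^ 32 = - ∑ l ∈ Finset.range 32, (rc l : ℂ) * x ^ l := by
    rw [Int.cast_one] at hx; linear_combination hx
  have h2 : ‖x‖ ^ 32 ≤ ∑ l ∈ Finset.range 32, ((rc l).natAbs : ℝ) * ‖x‖ ^ l := by
    rw [← norm_pow, h1, norm_neg]
    refine (norm_sum_le _ _).trans (le_of_eq (Finset.sum_congr rfl fun l _ => ?_))
    rw [norm_mul, norm_pow, abs_rc]
  have h3 : ∑ l ∈ Finset.range 32, ((rc l).natAbs : ℝ) * ‖x‖ ^ l ≤
      (∑ l ∈ Finset.range 32, ((rc l).natAbs : ℝ) * 14 ^ l) * t ^ 32 := by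
    rw [Finset.sum_mul]
    refine Finset.sum_le_sum fun l hl => ?_
    rw [hxt, mul_pow, ← mul_assoc]
    exact mul_le_mul_of_nonneg_left (pow_le_pow_right₀ ht1 (Finset.mem_range.mp hl).le) (by positivity)
  have h4 : (∑ l ∈ Finset.range 32, ((rc l).natAbs : ℝ) * 14 ^ l) * t ^ 32 < 14 ^ 32 * t ^ 32 :=
    mul_lt_mul_of_pos_right hS' (by positivity)
  rw [hxt, mul_pow] at h2
  rw [hxt] at h3
  linarith

theorem cb_eq (i : ℕ) : (cb i : ℝ) = ∑ l ∈ Finset.range (32 - i), ((rc (i + 1 + l)).natAbs : ℝ) * 14 ^ l := by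
  unfold cb; rw [sumN_eq, Nat.cast_sum]
  exact Finset.sum_congr rfl fun l _ => by push_cast; rfl

theorem dvb_eq : (dvb : ℝ) = ∑ l ∈ Finset.range 32, (l + 1 : ℕ) * ((rc (l + 1)).natAbs : ℝ) * 14 ^ l := by
  unfold dvb; rw [sumN_eq, Nat.cast_sum]
  exact Finset.sum_congr rfl fun l _ => by push_cast; rfl

theorem totJ_eq : (totJ : ℝ) = ∑ i ∈ Finset.range 32, ∑ j ∈ Finset.range 32, ∑ k ∈ Finset.range 32,
    (absJ i j k : ℝ) * (cb i * cb j * cb k) := by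
  unfold totJ; rw [sumN_eq, Nat.cast_sum]
  refine Finset.sum_congr rfl fun i _ => ?_
  rw [sumN_eq, Nat.cast_mul, Nat.cast_sum, Finset.mul_sum]
  refine Finset.sum_congr rfl fun j _ => ?_
  rw [sumN_eq, Nat.cast_mul, Nat.cast_sum, Finset.mul_sum, Finset.mul_sum]
  refine Finset.sum_congr rfl fun k _ => ?_
  rw [Nat.cast_mul]; ring

theorem cc_bound (i : ℕ) (x : ℂ) (hx : ‖x‖ ≤ 14) : ‖cc i x‖ ≤ cb i := by
  rw [cb_eq]; unfold cc
  refine (norm_sum_le _ _).trans (Finset.sum_le_sum fun l _ => ?_)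
  rw [norm_mul, norm_pow, abs_rc]
  gcongr

theorem dv_bound (x : ℂ) (hx : ‖x‖ ≤ 14) : ‖dv x‖ ≤ dvb := by
  rw [dvb_eq]; unfold dv
  refine (norm_sum_le _ _).trans (Finset.sum_le_sum fun l _ => ?_)
  rw [norm_mul, norm_mul, norm_pow, abs_rc, Complex.norm_natCast]
  gcongr

theorem FF_bound (x y z : ℂ) (hx : ‖x‖ ≤ 14) (hy : ‖y‖ ≤ 14) (hz : ‖z‖ ≤ 14) : ‖FF x y z‖ ≤ totJ := by
  rw [totJ_eq]; unfold FF
  refine (norm_sum_le _ _).trans (Finset.sum_le_sum fun i _ => ?_)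
  refine (norm_sum_le _ _).trans (Finset.sum_le_sum fun j _ => ?_)
  refine (norm_sum_le _ _).trans (Finset.sum_le_sum fun k _ => ?_)
  have h1 : ‖((JJ i j k : ℤ) : ℂ)‖ = (absJ i j k : ℝ) := by
    rw [Complex.norm_intCast, ← Int.cast_abs, JJ_abs, Int.cast_natCast]
  rw [norm_mul, norm_mul, norm_mul, h1]
  have := cc_bound i x hx
  have := cc_bound j y hy
  have := cc_bound k z hz
  gcongr

theorem bound_gen (T D M : ℕ) (h : Nat.blt (T ^ 2 + 31 * D ^ 6) M = true) (f d1 d2 d3 : ℂ)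
    (hf : ‖f‖ ≤ T) (h1 : ‖d1‖ ≤ D) (h2 : ‖d2‖ ≤ D) (h3 : ‖d3‖ ≤ D) :
    ‖f ^ 2 + 31 * (d1 * d2 * d3) ^ 2‖ < M := by
  have h' : (T ^ 2 + 31 * D ^ 6 : ℝ) < M := by exact_mod_cast Nat.blt_eq.mp h
  refine lt_of_le_of_lt ?_ h'
  refine (norm_add_le _ _).trans ?_
  rw [norm_pow, norm_mul, norm_pow, norm_mul, norm_mul]
  have e : ‖(31 : ℂ)‖ = 31 := by simp
  rw [e]
  calc _ ≤ (T : ℝ) ^ 2 + 31 * ((D : ℝ) * D * D) ^ 2 := by gcongr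
    _ = _ := by ring

theorem EE_bound (x y z : ℂ) (hx : ev x = 0) (hy : ev y = 0) (hz : ev z = 0) : ‖EE x y z‖ < MM := by
  have hx := root_bound x hx
  have hy := root_bound y hy
  have hz := root_bound z hz
  unfold EE
  exact bound_gen totJ dvb MM totJ_lt _ _ _ _ (FF_bound x y z hx hy hz) (dv_bound x hx) (dv_bound y hy)
    (dv_bound z hz)

section field
variable (LL : Type) [Field LL] [Algebra ℚ LL] [IsSplittingField ℚ LL R]

theorem exPsi (N : ℕ) (hN : N = 43) : ∃ (ψ : LL →ₐ[ℚ] ℚ_[pp]) (z : ℕ → ℤ_[pp]) (r : ℕ → LL),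
    (∀ a, a < 32 → ev (z a) = 0 ∧ PadicInt.toZModPow N (z a) = (rt a : ZMod (pp ^ N))) ∧
    (∀ a, a < 32 → ψ (r a) = z a ∧ ev (r a) = 0) ∧
    (∀ x : LL, ev x = 0 → ∃ a, a < 32 ∧ x = r a) ∧
    (∀ a b, a < 32 → b < 32 → r a = r b → a = b) := by
  classical
  obtain ⟨z, hz⟩ := exZ N hN
  have hM : pp ^ N = MM := by rw [hN]; exact MM_eq.symm
  have hinj : ∀ a b, a < 32 → b < 32 → (z a : ℚ_[pp]) = z b → a = b := by
    intro a b ha hb h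
    by_contra hab
    have h1 : z a = z b := PadicInt.ext h
    have h2 := rt_unit' _ hM a b ha hb hab
    rw [← (hz a ha).2, ← (hz b hb).2, h1, sub_self] at h2
    have : Nontrivial (ZMod (pp ^ N)) := by
      rw [hM]; exact ZMod.nontrivial_iff.mpr (by have := MM_pos; omega)
    exact not_isUnit_zero h2
  set P := R.map (algebraMap ℚ ℚ_[pp]) with hP
  have hP0 : P ≠ 0 := (R_monic.map _).ne_zero
  have hPd : P.natDegree = 32 := by rw [hP, R_monic.natDegree_map, R_deg]
  have hroot : ∀ x : ℚ_[pp], x ∈ P.roots ↔ ev x = 0 := by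
    intro x
    rw [mem_roots hP0, IsRoot.def, hP, eval_map_algebraMap, aeval_R]
  have hzr : ∀ a, a < 32 → ev (z a : ℚ_[pp]) = 0 := by
    intro a ha
    have := map_ev (PadicInt.Coe.ringHom (p := pp)) (z a)
    rw [(hz a ha).1, map_zero] at this
    exact this.symm
  set S : Finset ℚ_[pp] := (Finset.range 32).image (fun a => (z a : ℚ_[pp])) with hS
  have hScard : S.card = 32 := by
    rw [hS, Finset.card_image_of_injOn, Finset.card_range]
    intro a ha b hb h
    exact hinj a b (Finset.mem_range.mp ha) (Finset.mem_range.mp hb) h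
  have hSsub : S ⊆ P.roots.toFinset := by
    intro x hx
    obtain ⟨a, ha, rfl⟩ := Finset.mem_image.mp hx
    rw [Multiset.mem_toFinset, hroot]
    exact hzr a (Finset.mem_range.mp ha)
  have hle : P.roots.toFinset.card ≤ 32 :=
    (Multiset.toFinset_card_le _).trans ((card_roots' P).trans hPd.le)
  have hSeq : S = P.roots.toFinset := Finset.eq_of_subset_of_card_le hSsub (by rw [hScard]; exact hle)
  have hsplit : P.Splits := by
    rw [splits_iff_card_roots, hPd]
    refine le_antisymm ((card_roots' P).trans hPd.le) ?_
    calc 32 = P.roots.toFinset.card := by rw [← hSeq, hScard]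
      _ ≤ _ := Multiset.toFinset_card_le _
  obtain ⟨ψ⟩ : Nonempty (LL →ₐ[ℚ] ℚ_[pp]) := ⟨IsSplittingField.lift LL R hsplit⟩
  have hsurj : ∀ y : ℚ_[pp], ev y = 0 → ∃ x : LL, ψ x = y ∧ ev x = 0 := by
    intro y hy
    have h1 := (IsSplittingField.splits LL R).image_rootSet ψ
    have h2 : y ∈ R.rootSet ℚ_[pp] := by
      rw [mem_rootSet_of_ne R_ne, aeval_R]; exact hy
    rw [← h1] at h2
    obtain ⟨x, hx, rfl⟩ := h2
    refine ⟨x, rfl, ?_⟩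
    rw [mem_rootSet_of_ne R_ne, aeval_R] at hx
    exact hx
  have hr : ∀ a, ∃ x : LL, a < 32 → ψ x = z a ∧ ev x = 0 := by
    intro a
    by_cases ha : a < 32
    · obtain ⟨x, hx⟩ := hsurj _ (hzr a ha); exact ⟨x, fun _ => hx⟩
    · exact ⟨0, fun h => absurd h ha⟩
  choose r hr using hr
  refine ⟨ψ, z, r, hz, hr, ?_, ?_⟩
  · intro x hx
    have h1 : ev (ψ x) = 0 := by
      have := map_ev (ψ : LL →+* ℚ_[pp]) x
      rw [hx, map_zero] at this; exact this.symm
    have h2 : ψ x ∈ S := by rw [hSeq, Multiset.mem_toFinset, hroot]; exact h1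
    obtain ⟨a, ha, h3⟩ := Finset.mem_image.mp h2
    have ha := Finset.mem_range.mp ha
    refine ⟨a, ha, (ψ : LL →+* ℚ_[pp]).injective ?_⟩
    change ψ x = ψ (r a)
    rw [(hr a ha).1]; exact h3.symm
  · intro a b ha hb h
    apply hinj a b ha hb
    rw [← (hr a ha).1, ← (hr b hb).1, h]
end field

set_option linter.unusedSectionVars false
section field2
variable {L : Type} [Field L] [Algebra ℚ L] [IsSplittingField ℚ L R]

theorem ev_int (x : L) (hx : ev x = 0) : IsIntegral ℤ x :=
  ⟨RZ, RZ_monic, by rw [← aeval_def, aeval_RZ, hx]⟩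

theorem EE_int (x y z : L) (hx : ev x = 0) (hy : ev y = 0) (hz : ev z = 0) : IsIntegral ℤ (EE x y z) := by
  let S := integralClosure ℤ L
  let x' : S := ⟨x, ev_int x hx⟩
  let y' : S := ⟨y, ev_int y hy⟩
  let z' : S := ⟨z, ev_int z hz⟩
  have := map_EE (S.val : S →+* L) x' y' z'
  have h2 : EE x y z = ((EE x' y' z' : S) : L) := this.symm
  rw [h2]
  exact (EE x' y' z').2

theorem int_zero_gen (M : ℕ) (p N : ℕ) [Fact p.Prime] (hM : p ^ N = M) (g : ℕ) (n : ℤ)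
    (h1 : ‖(n : ℚ_[p])‖ ≤ (((p : ℝ) ^ N)⁻¹) ^ g) (h2 : |(n : ℝ)| < (M : ℝ) ^ g) : n = 0 := by
  have h3 : ‖(n : ℚ_[p])‖ ≤ (p : ℝ) ^ (-((N * g : ℕ) : ℤ)) := by
    refine h1.trans (le_of_eq ?_)
    rw [_root_.zpow_neg, zpow_natCast, pow_mul, inv_pow]
  rw [Padic.norm_int_le_pow_iff_dvd] at h3
  have h4 : |n| < (M : ℤ) ^ g := by exact_mod_cast h2
  refine Int.eq_zero_of_abs_lt_dvd h3 ?_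
  rw [pow_mul, ← hM] at *
  exact_mod_cast h4

theorem EE_zero (N : ℕ) (hN : N = 43) (ψ : L →ₐ[ℚ] ℚ_[pp]) (z : ℕ → ℤ_[pp]) (r : ℕ → L)
    (hz : ∀ a, a < 32 → ev (z a) = 0 ∧ PadicInt.toZModPow N (z a) = (rt a : ZMod (pp ^ N)))
    (hr : ∀ a, a < 32 → ψ (r a) = z a ∧ ev (r a) = 0)
    (hsurj : ∀ x : L, ev x = 0 → ∃ a, a < 32 ∧ x = r a)
    (x1 x2 x3 : L) (h1 : ev x1 = 0) (h2 : ev x2 = 0) (h3 : ev x3 = 0)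
    (h12 : x1 ≠ x2) (h13 : x1 ≠ x3) (h23 : x2 ≠ x3) : EE x1 x2 x3 = 0 := by
  have hM : pp ^ N = MM := by rw [hN]; exact MM_eq.symm
  have : FiniteDimensional ℚ L := IsSplittingField.finiteDimensional L R
  have : Normal ℚ L := Normal.of_isSplittingField R
  have : IsGalois ℚ L := {}
  set e := EE x1 x2 x3 with he
  have hint : IsIntegral ℤ (Algebra.norm ℚ e) := Algebra.isIntegral_norm ℚ (EE_int x1 x2 x3 h1 h2 h3)
  obtain ⟨n, hn⟩ := IsIntegrallyClosed.isIntegral_iff.mp hint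
  have hprod := Algebra.norm_eq_prod_automorphisms ℚ e
  rw [← hn] at hprod
  have hprod' : (n : L) = ∏ σ : L ≃ₐ[ℚ] L, σ e := by
    rw [← hprod]; simp
  have hσ : ∀ (σ : L ≃ₐ[ℚ] L) (x : L), ev x = 0 → ev (σ x) = 0 := by
    intro σ x hx
    have := map_ev (σ : L →+* L) x
    rw [hx, map_zero] at this; exact this.symm
  have hσe : ∀ σ : L ≃ₐ[ℚ] L, σ e = EE (σ x1) (σ x2) (σ x3) := fun σ => map_EE (σ : L →+* L) x1 x2 x3
  -- p-adic
  have hp : ∀ σ : L ≃ₐ[ℚ] L, ‖ψ (σ e)‖ ≤ ((pp : ℝ) ^ N)⁻¹ := by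
    intro σ
    obtain ⟨a, ha, e1⟩ := hsurj _ (hσ σ x1 h1)
    obtain ⟨b, hb, e2⟩ := hsurj _ (hσ σ x2 h2)
    obtain ⟨c, hc, e3⟩ := hsurj _ (hσ σ x3 h3)
    have hab : a ≠ b := by rintro rfl; exact h12 (σ.injective (e1.trans e2.symm))
    have hac : a ≠ c := by rintro rfl; exact h13 (σ.injective (e1.trans e3.symm))
    have hbc : b ≠ c := by rintro rfl; exact h23 (σ.injective (e2.trans e3.symm))
    have q1 : ψ (σ e) = ((EE (z a) (z b) (z c) : ℤ_[pp]) : ℚ_[pp]) := by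
      rw [hσe, e1, e2, e3]
      have t1 : ψ (EE (r a) (r b) (r c)) = _ := map_EE (ψ : L →+* ℚ_[pp]) (r a) (r b) (r c)
      have t2 : ((EE (z a) (z b) (z c) : ℤ_[pp]) : ℚ_[pp]) = _ :=
        map_EE (PadicInt.Coe.ringHom (p := pp)) (z a) (z b) (z c)
      rw [t1, t2]
      change EE (ψ (r a)) (ψ (r b)) (ψ (r c)) = EE (z a : ℚ_[pp]) (z b : ℚ_[pp]) (z c : ℚ_[pp])
      rw [(hr a ha).1, (hr b hb).1, (hr c hc).1]
    have q2 : PadicInt.toZModPow N (EE (z a) (z b) (z c)) = 0 := by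
      rw [map_EE, (hz a ha).2, (hz b hb).2, (hz c hc).2]
      exact EE_rt' _ hM a b c ha hb hc hab hac hbc
    rw [← RingHom.mem_ker, PadicInt.ker_toZModPow, ← PadicInt.norm_le_pow_iff_mem_span_pow] at q2
    rw [q1, ← PadicInt.norm_def]
    rw [_root_.zpow_neg, zpow_natCast] at q2
    exact q2
  -- complex
  let φ : L →ₐ[ℚ] ℂ := IsAlgClosed.lift
  have hc : ∀ σ : L ≃ₐ[ℚ] L, ‖φ (σ e)‖ < (MM : ℝ) := by
    intro σ
    have t1 : φ (EE (σ x1) (σ x2) (σ x3)) = _ := map_EE (φ : L →+* ℂ) (σ x1) (σ x2) (σ x3)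
    rw [hσe, t1]
    have t2 : ∀ x : L, ev x = 0 → ev ((φ : L →+* ℂ) x) = 0 := by
      intro x hx
      rw [← map_ev, hx, map_zero]
    exact EE_bound _ _ _ (t2 _ (hσ σ _ h1)) (t2 _ (hσ σ _ h2)) (t2 _ (hσ σ _ h3))
  have b1 : ‖(n : ℚ_[pp])‖ ≤ (((pp : ℝ) ^ N)⁻¹) ^ (Fintype.card (L ≃ₐ[ℚ] L)) := by
    have : (n : ℚ_[pp]) = ∏ σ : L ≃ₐ[ℚ] L, ψ (σ e) := by
      rw [← map_prod, ← hprod', map_intCast]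
    rw [this, norm_prod]
    refine (Finset.prod_le_prod (fun _ _ => norm_nonneg _) (fun σ _ => hp σ)).trans (le_of_eq ?_)
    rw [Finset.prod_const, Finset.card_univ]
  have b2 : |(n : ℝ)| < (MM : ℝ) ^ (Fintype.card (L ≃ₐ[ℚ] L)) := by
    have : (n : ℂ) = ∏ σ : L ≃ₐ[ℚ] L, φ (σ e) := by
      rw [← map_prod, ← hprod', map_intCast]
    rw [← Complex.norm_intCast, this, norm_prod]
    by_cases hz0 : ∃ σ : L ≃ₐ[ℚ] L, φ (σ e) = 0
    · obtain ⟨σ, hσ0⟩ := hz0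
      rw [Finset.prod_eq_zero (Finset.mem_univ σ) (by rw [hσ0, norm_zero])]
      have : (0 : ℝ) < MM := by exact_mod_cast (lt_trans Nat.zero_lt_one MM_pos)
      exact pow_pos this _
    · push Not at hz0
      have := Finset.prod_lt_prod_of_nonempty (s := (Finset.univ : Finset (L ≃ₐ[ℚ] L)))
        (f := fun σ => ‖φ (σ e)‖) (g := fun _ => (MM : ℝ)) (fun σ _ => norm_pos_iff.mpr (hz0 σ)) (fun σ _ => hc σ)
        ⟨1, Finset.mem_univ _⟩
      rwa [Finset.prod_const, Finset.card_univ] at this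
  have hn0 : n = 0 := int_zero_gen MM pp N hM _ n b1 b2
  rw [hn0, map_zero] at hn
  exact Algebra.norm_eq_zero_iff.mp hn.symm

theorem s0_unit (M : ℕ) (h : M = MM) : IsUnit (s0 : ZMod M) := by
  subst h
  have h1 : IsUnit ((s0 : ZMod MM) ^ 2) := by
    rw [s0_sq, IsUnit.neg_iff]
    have : (31 : ZMod MM) = ((31 : ℕ) : ZMod MM) := by norm_num
    rw [this, ZMod.isUnit_iff_coprime, MM_eq]
    apply Nat.Coprime.pow_right
    rw [Nat.coprime_primes (by norm_num) pp_prime]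
    unfold pp; norm_num
  exact (isUnit_pow_iff (by norm_num)).mp h1

theorem pm_gen (M : ℕ) (hM : 2 < M) (s u v : ZMod M) (hs : IsUnit s) (hu : IsUnit u) (hv : IsUnit v)
    (x y d : ℤ) (hx : x = 1 ∨ x = -1) (hy : y = 1 ∨ y = -1) (hd : d = 1 ∨ d = -1)
    (h : s * x * u * v = d * (s * y * v * u)) : x = d * y := by
  have h1 : (x : ZMod M) = ((d * y : ℤ) : ZMod M) := by
    have : (s * u * v) * (x : ZMod M) = (s * u * v) * ((d * y : ℤ) : ZMod M) := by
      push_cast; linear_combination h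
    exact ((hs.mul hu).mul hv).mul_left_cancel this
  rw [ZMod.intCast_eq_intCast_iff_dvd_sub] at h1
  have h2 : d * y - x = 0 := by
    refine Int.eq_zero_of_abs_lt_dvd h1 ?_
    rcases hx with rfl | rfl <;> rcases hy with rfl | rfl <;> rcases hd with rfl | rfl <;>
      norm_num <;> omega
  omega

theorem bigM : 2 < MM := by unfold MM; norm_num

theorem partA : ∃ r : ℕ → L, (∀ a, a < 32 → ev (r a) = 0) ∧
    (∀ x : L, ev x = 0 → ∃ a, a < 32 ∧ x = r a) ∧
    (∀ a b, a < 32 → b < 32 → r a = r b → a = b) ∧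
    ∀ σ : L ≃ₐ[ℚ] L, ∃ ε : ℤ, (ε = 1 ∨ ε = -1) ∧ ∀ a b c a' b' c', a < 32 → b < 32 → c < 32 →
      a' < 32 → b' < 32 → c' < 32 → a ≠ b → a ≠ c → b ≠ c → σ (r a) = r a' → σ (r b) = r b' →
      σ (r c) = r c' → chiZ a' b' c' = ε * chiZ a b c := by
  obtain ⟨N, hN⟩ : ∃ N, N = 43 := ⟨_, rfl⟩
  have hM : pp ^ N = MM := by rw [hN]; exact MM_eq.symm
  obtain ⟨ψ, z, r, hz, hr, hsurj, hinj⟩ := exPsi L N hN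
  refine ⟨r, fun a ha => (hr a ha).2, hsurj, hinj, ?_⟩
  have hψd : ∀ a, a < 32 → ψ (dv (r a)) = ((dv (z a) : ℤ_[pp]) : ℚ_[pp]) := by
    intro a ha
    have t1 : ψ (dv (r a)) = _ := map_dv (ψ : L →+* ℚ_[pp]) (r a)
    have t2 : ((dv (z a) : ℤ_[pp]) : ℚ_[pp]) = _ := map_dv (PadicInt.Coe.ringHom (p := pp)) (z a)
    rw [t1, t2]
    change dv (ψ (r a)) = dv (z a : ℚ_[pp])
    rw [(hr a ha).1]
  have hψF : ∀ a b c, a < 32 → b < 32 → c < 32 →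
      ψ (FF (r a) (r b) (r c)) = ((FF (z a) (z b) (z c) : ℤ_[pp]) : ℚ_[pp]) := by
    intro a b c ha hb hc
    have t1 : ψ (FF (r a) (r b) (r c)) = _ := map_FF (ψ : L →+* ℚ_[pp]) (r a) (r b) (r c)
    have t2 : ((FF (z a) (z b) (z c) : ℤ_[pp]) : ℚ_[pp]) = _ :=
      map_FF (PadicInt.Coe.ringHom (p := pp)) (z a) (z b) (z c)
    rw [t1, t2]
    change FF (ψ (r a)) (ψ (r b)) (ψ (r c)) = FF (z a : ℚ_[pp]) (z b : ℚ_[pp]) (z c : ℚ_[pp])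
    rw [(hr a ha).1, (hr b hb).1, (hr c hc).1]
  have hdu : ∀ a, a < 32 → IsUnit (PadicInt.toZModPow N (dv (z a))) := by
    intro a ha
    rw [map_dv, (hz a ha).2]; exact dv_unit' _ hM a ha
  have hd0 : ∀ a, a < 32 → dv (r a) ≠ 0 := by
    intro a ha h0
    have h1 := hψd a ha
    rw [h0, map_zero] at h1
    have h2 : dv (z a) = 0 := PadicInt.ext h1.symm
    have h3 := unit_of_toZMod N (by omega) _ (hdu a ha)
    rw [h2] at h3
    exact not_isUnit_zero h3
  set D : ℕ → ℕ → ℕ → L := fun a b c => dv (r a) * dv (r b) * dv (r c) with hD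
  have hD0 : ∀ a b c, a < 32 → b < 32 → c < 32 → D a b c ≠ 0 := by
    intro a b c ha hb hc
    exact mul_ne_zero (mul_ne_zero (hd0 a ha) (hd0 b hb)) (hd0 c hc)
  have hEE : ∀ a b c, a < 32 → b < 32 → c < 32 → a ≠ b → a ≠ c → b ≠ c →
      FF (r a) (r b) (r c) ^ 2 + 31 * D a b c ^ 2 = 0 := by
    intro a b c ha hb hc hab hac hbc
    exact EE_zero N hN ψ z r hz hr hsurj _ _ _ (hr a ha).2 (hr b hb).2 (hr c hc).2
      (fun h => hab (hinj a b ha hb h)) (fun h => hac (hinj a c ha hc h)) (fun h => hbc (hinj b c hb hc h))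
  set t : L := chiZ 0 1 2 * (FF (r 0) (r 1) (r 2) / D 0 1 2) with ht
  have hD012 := hD0 0 1 2 (by omega) (by omega) (by omega)
  have hE012 := hEE 0 1 2 (by omega) (by omega) (by omega) (by omega) (by omega) (by omega)
  have hχ012 := chiZ_pm 0 1 2 (by omega) (by omega) (by omega) (by omega) (by omega) (by omega)
  have hχsq : ((chiZ 0 1 2 : ℤ) : L) ^ 2 = 1 := by rcases hχ012 with h | h <;> rw [h] <;> simp
  have ht2 : t ^ 2 = -31 := by
    rw [ht, mul_pow, hχsq, div_pow]
    field_simp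
    linear_combination hE012
  have ht0 : t ≠ 0 := by
    intro h; rw [h] at ht2
    have : CharZero L := algebraRat.charZero L
    have : (31 : L) = 0 := by linear_combination ht2
    norm_num at this
  have key : ∀ a b c, a < 32 → b < 32 → c < 32 → a ≠ b → a ≠ c → b ≠ c →
      FF (r a) (r b) (r c) = chiZ a b c * t * D a b c := by
    intro a b c ha hb hc hab hac hbc
    have e1 := hEE a b c ha hb hc hab hac hbc
    have hF012 : FF (r 0) (r 1) (r 2) = chiZ 0 1 2 * t * D 0 1 2 := by
      have q : FF (r 0) (r 1) (r 2) / D 0 1 2 * D 0 1 2 = FF (r 0) (r 1) (r 2) := div_mul_cancel₀ _ hD012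
      rw [ht]
      generalize FF (r 0) (r 1) (r 2) / D 0 1 2 = w at q ⊢
      linear_combination (-FF (r 0) (r 1) (r 2)) * hχsq - ((chiZ 0 1 2 : ℤ) : L) ^ 2 * q
    obtain ⟨d, hd, hdF⟩ : ∃ d : ℤ, (d = 1 ∨ d = -1) ∧
        FF (r a) (r b) (r c) * D 0 1 2 = d * (FF (r 0) (r 1) (r 2) * D a b c) := by
      have : (FF (r a) (r b) (r c) * D 0 1 2 - FF (r 0) (r 1) (r 2) * D a b c) *
         (FF (r a) (r b) (r c) * D 0 1 2 + FF (r 0) (r 1) (r 2) * D a b c) = 0 := by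
        linear_combination D 0 1 2 ^ 2 * e1 - D a b c ^ 2 * hE012
      rcases mul_eq_zero.mp this with h | h
      · exact ⟨1, Or.inl rfl, by rw [Int.cast_one]; linear_combination h⟩
      · exact ⟨-1, Or.inr rfl, by rw [Int.cast_neg, Int.cast_one]; linear_combination h⟩
    have hχ := chiZ_pm a b c ha hb hc hab hac hbc
    have hx : chiZ a b c = d * chiZ 0 1 2 := by
      have q := congrArg ψ hdF
      simp only [hD, map_mul, map_intCast] at q
      rw [hψF a b c ha hb hc, hψF 0 1 2 (by omega) (by omega) (by omega), hψd a ha, hψd b hb, hψd c hc,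
        hψd 0 (by omega), hψd 1 (by omega), hψd 2 (by omega)] at q
      have q' : FF (z a) (z b) (z c) * (dv (z 0) * dv (z 1) * dv (z 2)) =
          (d : ℤ_[pp]) * (FF (z 0) (z 1) (z 2) * (dv (z a) * dv (z b) * dv (z c))) := by
        apply PadicInt.ext
        simp only [PadicInt.coe_mul, PadicInt.coe_intCast]
        exact q
      have q2 := congrArg (PadicInt.toZModPow N) q'
      simp only [map_mul, map_intCast, map_FF] at q2
      rw [(hz a ha).2, (hz b hb).2, (hz c hc).2, (hz 0 (by omega)).2, (hz 1 (by omega)).2,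
        (hz 2 (by omega)).2, FF_rt' _ hM a b c ha hb hc, FF_rt' _ hM 0 1 2 (by omega) (by omega) (by omega)] at q2
      simp only [map_dv] at q2
      rw [(hz a ha).2, (hz b hb).2, (hz c hc).2, (hz 0 (by omega)).2, (hz 1 (by omega)).2,
        (hz 2 (by omega)).2] at q2
      have hu : ∀ a b c, a < 32 → b < 32 → c < 32 → IsUnit (dv (rt a : ZMod (pp ^ N)) * dv (rt b : ZMod (pp ^ N)) *
          dv (rt c : ZMod (pp ^ N))) := fun a b c ha hb hc =>
        ((dv_unit' _ hM a ha).mul (dv_unit' _ hM b hb)).mul (dv_unit' _ hM c hc)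
      exact pm_gen (pp ^ N) (by rw [hM]; have := bigM; omega) _ _ _ (s0_unit _ hM) (hu a b c ha hb hc)
        (hu 0 1 2 (by omega) (by omega) (by omega)) _ _ d hχ hχ012 hd q2
    rw [hx]
    push_cast
    apply mul_right_cancel₀ hD012
    rw [hdF, hF012]; ring
  intro σ
  have hσF : ∀ x y z : L, σ (FF x y z) = FF (σ x) (σ y) (σ z) := fun x y z => map_FF (σ : L →+* L) x y z
  have hσd : ∀ x : L, σ (dv x) = dv (σ x) := fun x => map_dv (σ : L →+* L) x
  have hst : σ t = t ∨ σ t = - t := by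
    have : (σ t) ^ 2 = t ^ 2 := by rw [← map_pow, ht2, map_neg]; exact congrArg _ (map_ofNat σ 31)
    exact sq_eq_sq_iff_eq_or_eq_neg.mp this
  obtain ⟨ε, hε, hεt⟩ : ∃ ε : ℤ, (ε = 1 ∨ ε = -1) ∧ σ t = ε * t := by
    rcases hst with h | h
    · exact ⟨1, Or.inl rfl, by simpa using h⟩
    · exact ⟨-1, Or.inr rfl, by simpa using h⟩
  refine ⟨ε, hε, ?_⟩
  intro a b c a' b' c' ha hb hc ha' hb' hc' hab hac hbc ea eb ec
  have k1 := congrArg σ (key a b c ha hb hc hab hac hbc)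
  have hab' : a' ≠ b' := by rintro rfl; exact hab (hinj a b ha hb (σ.injective (ea.trans eb.symm)))
  have hac' : a' ≠ c' := by rintro rfl; exact hac (hinj a c ha hc (σ.injective (ea.trans ec.symm)))
  have hbc' : b' ≠ c' := by rintro rfl; exact hbc (hinj b c hb hc (σ.injective (eb.trans ec.symm)))
  have k2 := key a' b' c' ha' hb' hc' hab' hac' hbc'
  simp only [hD, map_mul, map_intCast, hσF, hσd, ea, eb, ec, hεt] at k1
  rw [k2] at k1
  have k3 : ((chiZ a' b' c' : ℤ) : L) = ((ε * chiZ a b c : ℤ) : L) := by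
    apply mul_right_cancel₀ ht0
    apply mul_right_cancel₀ (hD0 a' b' c' ha' hb' hc')
    push_cast
    simp only [hD] at k1 ⊢
    linear_combination k1
  have : CharZero L := algebraRat.charZero L
  exact_mod_cast k3

end field2

set_option linter.unusedSectionVars false
noncomputable def frc (x : ℕ) (F : ℕ → ℕ) : ℕ := Nat.rec (F 0) (fun n _ => F (n + 1)) x
theorem frc_eq (x : ℕ) (F : ℕ → ℕ) : frc x F = F x := by cases x <;> rfl

noncomputable def dg (B c k : ℕ) : ℕ := c / B ^ k % B
noncomputable def nrm (B q s : ℕ) : ℕ := frc s (fun s => sumN 32 (fun k => (dg B s k % q) * B ^ k))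
noncomputable def mX (B q N c : ℕ) : ℕ := frc c (fun c =>
  nrm B q (sumN 31 (fun k => dg B c k * B ^ (k + 1)) + dg B c 31 * N))
noncomputable def lin (B q W c : ℕ) : ℕ := frc c (fun c =>
  nrm B q (sumN 32 (fun j => dg B c j * dg (B ^ 32) W j)))
noncomputable def itN (F : ℕ → ℕ) (c n : ℕ) : ℕ := Nat.rec c (fun _ ih => F ih) n
noncomputable def tabN (B : ℕ) (F : ℕ → ℕ) : ℕ := sumN 32 (fun j => F j * (B ^ 32) ^ j)
noncomputable def NN (B q : ℕ) : ℕ := sumN 32 (fun k => ((-rc k) % (q : ℤ)).toNat * B ^ k)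
noncomputable def frobTab (B q : ℕ) : ℕ := frc (NN B q) (fun N => frc (itN (mX B q N) 1 q) (fun h =>
  frc (tabN B (fun j => itN (mX B q N) h j)) (fun W1 => tabN B (fun i => itN (lin B q W1) 1 i))))
noncomputable def gN (B q m : ℕ) : ℕ := frc (frobTab B q) (fun W => itN (lin B q W) B m)

theorem digs_eq (B : ℕ) (f : ℕ → ℕ) (hf : ∀ k, f k < B) (k : ℕ) (hk : k < 32) :
    dg B (∑ l ∈ Finset.range 32, f l * B ^ l) k = f k := digit_extract B f hf 32 k hk

theorem pack_lt (B : ℕ) (f : ℕ → ℕ) (hf : ∀ k, f k < B) (n : ℕ) :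
    ∑ l ∈ Finset.range n, f l * B ^ l < B ^ n := by
  induction n with
  | zero => simp
  | succ m ih =>
    rw [Finset.sum_range_succ, pow_succ]
    have : f m + 1 ≤ B := hf m
    calc _ < B ^ m + f m * B ^ m := by omega
      _ = (f m + 1) * B ^ m := by ring
      _ ≤ B * B ^ m := Nat.mul_le_mul_right _ this
      _ = _ := by ring

section rep
variable {A : Type*} [CommRing A] (B q : ℕ) [CharP A q] (y : A)

def Rpk (c : ℕ) (u : A) : Prop := ∃ f : ℕ → ℕ, (∀ k, f k < q) ∧
  c = ∑ k ∈ Finset.range 32, f k * B ^ k ∧ ∑ k ∈ Finset.range 32, (f k : A) * y ^ k = u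

variable {B q y}

theorem nrm_rep (hq : 0 < q) (s : ℕ) (u : A) (f : ℕ → ℕ) (hf : ∀ k, f k < B)
    (hs : s = ∑ k ∈ Finset.range 32, f k * B ^ k)
    (hu : ∑ k ∈ Finset.range 32, (f k : A) * y ^ k = u) : Rpk B q y (nrm B q s) u := by
  refine ⟨fun k => f k % q, fun k => Nat.mod_lt _ hq, ?_, ?_⟩
  · rw [nrm, frc_eq, sumN_eq]
    refine Finset.sum_congr rfl fun k hk => ?_
    rw [hs, digs_eq B f hf k (Finset.mem_range.mp hk)]
  · rw [← hu]
    refine Finset.sum_congr rfl fun k hk => ?_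
    rw [← CharP.cast_eq_mod A q (f k)]

theorem NN_rep (hq : 0 < q) (hy : ev y = 0) : Rpk B q y (NN B q) (y ^ 32) := by
  have hq' : (q : ℤ) ≠ 0 := by exact_mod_cast hq.ne'
  refine ⟨fun k => ((-rc k) % (q : ℤ)).toNat, fun k => ?_, ?_, ?_⟩
  · have := Int.emod_nonneg (-rc k) hq'
    have := Int.emod_lt_of_pos (-rc k) (show (0 : ℤ) < q by exact_mod_cast hq)
    beta_reduce
    omega
  · rw [NN, sumN_eq]
  · have h : ∀ k, ((((-rc k) % (q : ℤ)).toNat : ℕ) : A) = - (rc k : A) := by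
      intro k
      have h1 : ((((-rc k) % (q : ℤ)).toNat : ℕ) : ℤ) = (-rc k) % (q : ℤ) :=
        Int.toNat_of_nonneg (Int.emod_nonneg (-rc k) hq')
      have h2 : ((((-rc k) % (q : ℤ)).toNat : ℤ) : A) = ((-rc k : ℤ) : A) := by
        rw [h1]
        rw [CharP.intCast_eq_intCast A q]
        exact Int.mod_modEq _ _
      rw [Int.cast_natCast] at h2
      rw [h2]; push_cast; rfl
    simp only [h]
    have h32 : rc 32 = 1 := by rw [rc_eq]; rfl
    rw [ev, Finset.sum_range_succ, h32] at hy
    simp only [neg_mul, Finset.sum_neg_distrib]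
    linear_combination -hy

theorem mX_rep (hq : 0 < q) (hB : 33 * q * q < B) (N c : ℕ) (u : A) (hN : Rpk B q y N (y ^ 32))
    (hc : Rpk B q y c u) : Rpk B q y (mX B q N c) (y * u) := by
  obtain ⟨g, hg, hg1, hg2⟩ := hN
  obtain ⟨f, hf, hf1, hf2⟩ := hc
  have hqB : q < B := by nlinarith
  have hd : ∀ k, k < 32 → dg B c k = f k := fun k hk => by
    rw [hf1, digs_eq B f (fun k => (hf k).trans hqB) k hk]
  rw [mX, frc_eq]
  refine nrm_rep hq _ _ (fun k => (if k = 0 then 0 else f (k - 1)) + f 31 * g k) ?_ ?_ ?_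
  · intro k
    have h1 := hf 31
    have h2 := hg k
    have h3 : f 31 * g k ≤ q * q := Nat.mul_le_mul h1.le h2.le
    have h4 := hf (k - 1)
    beta_reduce
    split_ifs <;> nlinarith
  · rw [sumN_eq, hd 31 (by norm_num), hg1, Finset.mul_sum]
    have : ∑ k ∈ Finset.range 31, dg B c k * B ^ (k + 1) =
        ∑ k ∈ Finset.range 32, (if k = 0 then 0 else f (k - 1)) * B ^ k := by
      rw [Finset.sum_range_succ' _ 31]
      simp only [if_true, Nat.succ_ne_zero, if_false, zero_mul, add_zero, Nat.add_sub_cancel]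
      refine Finset.sum_congr rfl fun k hk => ?_
      rw [hd k (by have := Finset.mem_range.mp hk; omega)]
    rw [this, ← Finset.sum_add_distrib]
    refine Finset.sum_congr rfl fun k hk => ?_
    ring
  · have e : y * ∑ k ∈ Finset.range 32, (f k : A) * y ^ k = ∑ k ∈ Finset.range 31, y * ((f k : A) * y ^ k) +
        ∑ k ∈ Finset.range 32, (f 31 : A) * ((g k : A) * y ^ k) := by
      rw [← Finset.mul_sum, ← Finset.mul_sum (a := (f 31 : A)), hg2, Finset.sum_range_succ _ 31]
      ring
    rw [← hf2, e]
    have : ∑ k ∈ Finset.range 31, y * ((f k : A) * y ^ k) =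
        ∑ k ∈ Finset.range 32, (((if k = 0 then 0 else f (k - 1) : ℕ)) : A) * y ^ k := by
      rw [Finset.sum_range_succ' _ 31]
      simp only [if_true, Nat.succ_ne_zero, if_false, Nat.cast_zero, zero_mul, add_zero, Nat.add_sub_cancel]
      refine Finset.sum_congr rfl fun k hk => ?_
      ring
    rw [this, ← Finset.sum_add_distrib]
    refine Finset.sum_congr rfl fun k hk => ?_
    push_cast
    ring

theorem itN_rep (F : ℕ → ℕ) (c : ℕ) (v u : A)
    (hF : ∀ c u, Rpk B q y c u → Rpk B q y (F c) (v * u)) (hc : Rpk B q y c u) (n : ℕ) :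
    Rpk B q y (itN F c n) (v ^ n * u) := by
  induction n with
  | zero => simpa [itN] using hc
  | succ n ih => 
    rw [pow_succ', mul_assoc]
    exact hF _ _ ih

theorem Rpk.lt (hqB : q < B) {c : ℕ} {u : A} (h : Rpk B q y c u) : c < B ^ 32 := by
  obtain ⟨f, hf, hf1, -⟩ := h
  rw [hf1]; exact pack_lt B f (fun k => (hf k).trans hqB) 32

theorem tab_rep (hqB : q < B) (F : ℕ → ℕ) (u : ℕ → A) (h : ∀ j, Rpk B q y (F j) (u j)) (j : ℕ) (hj : j < 32) :
    Rpk B q y (dg (B ^ 32) (tabN B F) j) (u j) := by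
  rw [tabN, sumN_eq, digs_eq (B ^ 32) F (fun k => (h k).lt hqB) j hj]
  exact h j

theorem lin_rep (hq : 0 < q) (hB : 33 * q * q < B) (W : ℕ) (u : ℕ → A)
    (hW : ∀ j, j < 32 → Rpk B q y (dg (B ^ 32) W j) (u j)) (c : ℕ) (f : ℕ → ℕ) (hf : ∀ k, f k < q)
    (hc : c = ∑ k ∈ Finset.range 32, f k * B ^ k) :
    Rpk B q y (lin B q W c) (∑ k ∈ Finset.range 32, (f k : A) * u k) := by
  have hqB : q < B := by nlinarith
  have hW' : ∀ j, ∃ g : ℕ → ℕ, j < 32 → (∀ k, g k < q) ∧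
    dg (B ^ 32) W j = ∑ k ∈ Finset.range 32, g k * B ^ k ∧
      ∑ k ∈ Finset.range 32, (g k : A) * y ^ k = u j := by
    intro j
    by_cases hj : j < 32
    · obtain ⟨g, h⟩ := hW j hj
      exact ⟨g, fun _ => h⟩
    · exact ⟨0, fun h => absurd h hj⟩
  choose g hg using hW'
  have hd : ∀ k, k < 32 → dg B c k = f k := fun k hk => by
    rw [hc, digs_eq B f (fun k => (hf k).trans hqB) k hk]
  rw [lin, frc_eq]
  refine nrm_rep hq _ _ (fun k => ∑ j ∈ Finset.range 32, f j * g j k) ?_ ?_ ?_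
  · intro k
    have : ∑ j ∈ Finset.range 32, f j * g j k ≤ ∑ j ∈ Finset.range 32, q * q := by
      refine Finset.sum_le_sum fun j hj => ?_
      exact Nat.mul_le_mul (hf j).le ((hg j (Finset.mem_range.mp hj)).1 k).le
    simp at this
    nlinarith
  · rw [sumN_eq]
    simp only [Finset.sum_mul]
    rw [Finset.sum_comm]
    refine Finset.sum_congr rfl fun j hj => ?_
    have hj := Finset.mem_range.mp hj
    rw [hd j hj, (hg j hj).2.1, Finset.mul_sum]
    exact Finset.sum_congr rfl fun k hk => (mul_assoc _ _ _).symm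
  · simp only [Nat.cast_sum, Finset.sum_mul]
    rw [Finset.sum_comm]
    refine Finset.sum_congr rfl fun j hj => ?_
    have hj := Finset.mem_range.mp hj
    rw [← (hg j hj).2.2, Finset.mul_sum]
    refine Finset.sum_congr rfl fun k hk => ?_
    push_cast; ring

theorem one_rep (hq : 1 < q) : Rpk B q y 1 (1 : A) := by
  refine ⟨fun k => if k = 0 then 1 else 0, fun k => ?_, ?_, ?_⟩
  · beta_reduce; split_ifs <;> omega
  · simp
  · simp

theorem X_rep (hq : 1 < q) : Rpk B q y B y := by
  refine ⟨fun k => if k = 1 then 1 else 0, fun k => ?_, ?_, ?_⟩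
  · beta_reduce; split_ifs <;> omega
  · simp
  · simp

theorem frobTab_rep (hq : q.Prime) (hB : 33 * q * q < B) (hy : ev y = 0) (i : ℕ) (hi : i < 32) :
    Rpk B q y (dg (B ^ 32) (frobTab B q) i) ((y ^ q) ^ i) := by
  have hq0 := hq.pos
  have hqB : q < B := by nlinarith
  have hN : Rpk B q y (NN B q) (y ^ 32) := NN_rep hq0 hy
  rw [frobTab, frc_eq, frc_eq, frc_eq]
  have hh : Rpk B q y (itN (mX B q (NN B q)) 1 q) (y ^ q) := by
    simpa using itN_rep (mX B q (NN B q)) 1 y 1 (fun c u h => mX_rep hq0 hB _ c u hN h) (one_rep hq.one_lt) q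
  have h1 := tab_rep hqB (fun j => itN (mX B q (NN B q)) (itN (mX B q (NN B q)) 1 q) j) (fun j => y ^ j * y ^ q)
    (fun j => itN_rep _ _ y (y ^ q) (fun c u h => mX_rep hq0 hB _ c u hN h) hh j)
  refine tab_rep hqB _ (fun i => (y ^ q) ^ i) (fun i => ?_) i hi
  have := itN_rep (lin B q (tabN B (fun j => itN (mX B q (NN B q)) (itN (mX B q (NN B q)) 1 q) j))) 1 (y ^ q) 1 (y := y) (B := B) ?_ (one_rep hq.one_lt) i
  · simpa using this
  · rintro c u ⟨f, hf, hf1, hf2⟩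
    have := lin_rep hq0 hB _ _ h1 c f hf hf1
    convert this using 1
    rw [← hf2, Finset.mul_sum]
    refine Finset.sum_congr rfl fun k hk => ?_
    ring

theorem gN_rep (hq : q.Prime) (hB : 33 * q * q < B) (hy : ev y = 0) (m : ℕ) :
    Rpk B q y (gN B q m) (y ^ q ^ m) := by
  have hq0 := hq.pos
  have : Fact q.Prime := ⟨hq⟩
  rw [gN, frc_eq]
  induction m with
  | zero => simpa [itN] using X_rep hq.one_lt
  | succ m ih =>
    obtain ⟨f, hf, hf1, hf2⟩ := ih
    have := lin_rep hq0 hB _ _ (frobTab_rep hq hB hy) _ f hf hf1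
    have h2 : y ^ q ^ (m + 1) = ∑ k ∈ Finset.range 32, (f k : A) * (y ^ q) ^ k := by
      rw [pow_succ, pow_mul, ← hf2, ← frobenius_def q, map_sum]
      refine Finset.sum_congr rfl fun k hk => ?_
      rw [map_mul, map_natCast, map_pow, frobenius_def]
    rw [h2]
    exact this

theorem gN_X (hq : q.Prime) (hB : 33 * q * q < B) (hy : ev y = 0) (m : ℕ) (h : gN B q m = B) :
    y ^ q ^ m = y := by
  have hqB : q < B := by have := hq.pos; nlinarith
  obtain ⟨f, hf, hf1, hf2⟩ := gN_rep hq hB hy m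
  obtain ⟨g, hg, hg1, hg2⟩ := X_rep (A := A) (B := B) (y := y) hq.one_lt
  rw [← hf2]
  refine Eq.trans ?_ hg2
  refine Finset.sum_congr rfl fun k hk => ?_
  have hk := Finset.mem_range.mp hk
  rw [← digs_eq B f (fun k => (hf k).trans hqB) k hk, ← digs_eq B g (fun k => (hg k).trans hqB) k hk,
    ← hf1, ← hg1, h]

end rep

theorem gN_ne {F : Type*} [Field F] {B q : ℕ} [CharP F q] (hq : q.Prime) (hB : 33 * q * q < B) (y : ℕ → F)
    (hy : ∀ a, a < 32 → ev (y a) = 0) (hinj : ∀ a b, a < 32 → b < 32 → y a = y b → a = b)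
    (m : ℕ) (h : ∀ a, a < 32 → y a ^ q ^ m = y a) : gN B q m = B := by
  have hqB : q < B := by have := hq.pos; nlinarith
  obtain ⟨f, hf, hf1, -⟩ := gN_rep hq hB (hy 0 (by norm_num)) m
  have h2 : ∀ a, a < 32 → ∑ k ∈ Finset.range 32, (f k : F) * y a ^ k = y a := by
    intro a ha
    obtain ⟨g, hg, hg1, hg2⟩ := gN_rep hq hB (hy a ha) m
    rw [h a ha] at hg2
    refine Eq.trans ?_ hg2
    refine Finset.sum_congr rfl fun k hk => ?_
    have hk := Finset.mem_range.mp hk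
    rw [← digs_eq B f (fun k => (hf k).trans hqB) k hk, ← digs_eq B g (fun k => (hg k).trans hqB) k hk,
      ← hf1, ← hg1]
  have h0 : (∑ l ∈ Finset.range 32, C (f l : F) * X ^ l - X : F[X]) = 0 := by
    apply Polynomial.eq_zero_of_natDegree_lt_card_of_eval_eq_zero _ (f := fun a : Fin 32 => y a)
    · intro a b hab; exact Fin.ext (hinj a b a.2 b.2 hab)
    · intro a
      rw [eval_sub, eval_finsetSum, eval_X, sub_eq_zero]
      refine Eq.trans ?_ (h2 a a.2)
      refine Finset.sum_congr rfl fun l hl => ?_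
      simp
    · rw [Fintype.card_fin]
      have : (∑ l ∈ Finset.range 32, C (f l : F) * X ^ l - X : F[X]).natDegree ≤ 31 := by
        refine (natDegree_sub_le _ _).trans (max_le ?_ (natDegree_X_le.trans (by norm_num)))
        refine natDegree_sum_le_of_forall_le _ _ fun l hl => ?_
        exact (natDegree_C_mul_X_pow_le _ _).trans (by have := Finset.mem_range.mp hl; omega)
      omega
  rw [hf1]
  have hfk : ∀ l, l < 32 → f l = if l = 1 then 1 else 0 := by
    intro l hl
    have := congrArg (fun p => coeff p l) h0
    simp only [coeff_sub, finsetSum_coeff, coeff_C_mul, coeff_X_pow, coeff_X, coeff_zero, mul_ite, mul_one, mul_zero,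
      Finset.sum_ite_eq, Finset.mem_range, hl, if_true, sub_eq_zero] at this
    have h3 : ((f l : ℕ) : F) = ((if l = 1 then 1 else 0 : ℕ) : F) := by
      rw [this]; by_cases h : l = 1 <;> simp [h, eq_comm]
    rw [CharP.cast_eq_iff_mod_eq F q] at h3
    refine Nat.ModEq.eq_of_lt_of_lt h3 (hf l) ?_
    have := hq.one_lt
    split_ifs <;> omega
  rw [Finset.sum_congr rfl (fun l hl => by rw [hfk l (Finset.mem_range.mp hl)])]
  simp

theorem chk43 : Nat.beq (gN 262144 43 30) 262144 = true := by decide +kernel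
theorem chk43a : Nat.beq (gN 262144 43 6) 262144 = false := by decide +kernel
theorem chk43b : Nat.beq (gN 262144 43 10) 262144 = false := by decide +kernel
theorem chk43c : Nat.beq (gN 262144 43 15) 262144 = false := by decide +kernel
theorem chk71 : Nat.beq (gN 262144 71 31) 262144 = true := by decide +kernel
theorem chk71a : Nat.beq (gN 262144 71 1) 262144 = false := by decide +kernel
attribute [irreducible] gN

open NumberField in
theorem frob_ex0 (L : Type) [Field L] [NumberField L] [IsGalois ℚ L] (q : ℕ) (hq : q.Prime) :
    ∃ (k : Type) (_ : Field k) (_ : CharP k q) (f : 𝓞 L →+* k) (σ : L ≃ₐ[ℚ] L),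
      ∀ x y : 𝓞 L, (y : L) = σ (x : L) → f y = f x ^ q := by
  have hqz : Prime (q : ℤ) := Nat.prime_iff_prime_int.mp hq
  have hP : (Ideal.span {(q : ℤ)}).IsPrime := (Ideal.span_singleton_prime hqz.ne_zero).mpr hqz
  have hPM : (Ideal.span {(q : ℤ)}).IsMaximal := hP.isMaximal (by simpa using hqz.ne_zero)
  obtain ⟨Q, -, hQ, hQP⟩ := Ideal.exists_ideal_over_prime_of_isIntegral (S := 𝓞 L) (Ideal.span {(q : ℤ)}) ⊥
    (by
      intro x hx
      have : algebraMap ℤ (𝓞 L) x = 0 := by simpa using hx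
      have : x = 0 := by simpa using this
      rw [this]; exact zero_mem _)
  have hQM : Q.IsMaximal := by
    have : (Q.comap (algebraMap ℤ (𝓞 L))).IsMaximal := by rw [hQP]; exact hPM
    exact Ideal.isMaximal_of_isIntegral_of_isMaximal_comap Q this
  obtain ⟨σ, hσ⟩ := IsArithFrobAt.exists_of_isInvariant ℤ (L ≃ₐ[ℚ] L) Q
  have hcard : Nat.card (ℤ ⧸ Q.under ℤ) = q := by
    have : Q.under ℤ = Ideal.span {(q : ℤ)} := hQP
    rw [this]
    rw [Nat.card_congr (Int.quotientSpanNatEquivZMod q).toEquiv, Nat.card_zmod]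
  refine ⟨𝓞 L ⧸ Q, Ideal.Quotient.field Q, ?_, Ideal.Quotient.mk Q, σ, ?_⟩
  · have h0 : ((q : ℕ) : 𝓞 L ⧸ Q) = 0 := by
      have h1 : algebraMap ℤ (𝓞 L) q ∈ Q := by
        rw [← Ideal.mem_comap, hQP]; exact Ideal.mem_span_singleton_self _
      have h2 := Ideal.Quotient.eq_zero_iff_mem.mpr h1
      simpa using h2
    let _ := Ideal.Quotient.field Q
    exact (CharP.charP_iff_prime_eq_zero hq).mpr h0
  · intro x y h
    have e : y = σ • x := by
      apply RingOfIntegers.ext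
      rw [h]; rfl
    rw [e]
    have := hσ x
    rw [hcard] at this
    rw [← map_pow]
    exact (Ideal.Quotient.mk_eq_mk_iff_sub_mem _ _).mpr this

section
variable {L : Type} [Field L] [Algebra ℚ L] [IsSplittingField ℚ L R]

theorem fix_one (r : ℕ → L) (hall : ∀ x, ev x = 0 → ∃ a, a < 32 ∧ x = r a) (σ : L ≃ₐ[ℚ] L)
    (h : ∀ a, a < 32 → σ (r a) = r a) : σ = 1 := by
  have h1 := IsSplittingField.adjoin_rootSet L R
  have h2 : (σ : L →ₐ[ℚ] L) = AlgHom.id ℚ L := by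
    apply AlgHom.ext_of_adjoin_eq_top h1
    intro x hx
    obtain ⟨a, ha, rfl⟩ := hall x (by rw [← aeval_R]; exact (mem_rootSet.mp hx).2)
    exact h a ha
  apply AlgEquiv.ext
  intro x
  exact congrArg (fun f : L →ₐ[ℚ] L => f x) h2

theorem frob_ex (q : ℕ) (hq : q.Prime) (r : ℕ → L) (hr : ∀ a, a < 32 → ev (r a) = 0)
    (hinj : ∀ a b, a < 32 → b < 32 → r a = r b → a = b) :
    ∃ (k : Type) (_ : Field k) (_ : CharP k q) (σ : L ≃ₐ[ℚ] L) (y : ℕ → k),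
      (∀ a, a < 32 → ev (y a) = 0) ∧ (∀ a b, a < 32 → b < 32 → a ≠ b → KK (y a) (y b) = 0) ∧
      (∀ a b, a < 32 → b < 32 → σ (r a) = r b → y b = y a ^ q) := by
  have hc : CharZero L := algebraRat.charZero L
  obtain rfl : ‹Algebra ℚ L› = DivisionRing.toRatAlgebra := Subsingleton.elim _ _
  have hfd : FiniteDimensional ℚ L := IsSplittingField.finiteDimensional L R
  have hn : Normal ℚ L := Normal.of_isSplittingField R
  have : NumberField L := ⟨⟩
  have : IsGalois ℚ L := ⟨⟩
  obtain ⟨k, i1, i2, f, σ, h⟩ := frob_ex0 L q hq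
  refine ⟨k, i1, i2, σ, ?_⟩
  obtain ⟨s, hs⟩ : ∃ s : ℕ → NumberField.RingOfIntegers L, ∀ a, a < 32 → (s a : L) = r a := by
    have h1 : ∀ a, ∃ s : NumberField.RingOfIntegers L, a < 32 → (s : L) = r a := by
      intro a
      by_cases h : a < 32
      · exact ⟨⟨r a, ev_int _ (hr a h)⟩, fun _ => rfl⟩
      · exact ⟨0, fun h' => absurd h' h⟩
    exact Classical.axiomOfChoice h1
  have hsinj : Function.Injective (algebraMap (NumberField.RingOfIntegers L) L) :=
    NumberField.RingOfIntegers.coe_injective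
  have hKmap : ∀ {A B : Type} [CommRing A] [CommRing B] (f : A →+* B) (x y : A),
      f (KK x y) = KK (f x) (f y) := by
    intro A B _ _ f x y
    simp [KK, map_cc]
  refine ⟨fun a => f (s a), ?_, ?_, ?_⟩
  · intro a ha
    rw [← map_ev, show ev (s a) = 0 from ?_, map_zero]
    apply hsinj
    rw [map_ev, map_zero]
    exact (congrArg ev (hs a ha)).trans (hr a ha)
  · intro a b ha hb hab
    rw [← hKmap, show KK (s a) (s b) = 0 from ?_, map_zero]
    apply hsinj
    rw [hKmap, map_zero]
    have e1 := hs a ha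
    have e2 := hs b hb
    rw [show algebraMap (NumberField.RingOfIntegers L) L (s a) = r a from e1,
      show algebraMap (NumberField.RingOfIntegers L) L (s b) = r b from e2]
    have := KK_mul (r a) (r b)
    rw [hr a ha, hr b hb, sub_zero] at this
    rcases mul_eq_zero.mp this with h | h
    · exact h
    · exact absurd (hinj a b ha hb (sub_eq_zero.mp h)) hab
  · intro a b ha hb hab
    apply h
    rw [hs a ha, hs b hb, hab]

end

theorem dv_sep {k : Type*} [Field k] {B q : ℕ} [CharP k q] (hq : q.Prime) (hB : 33 * q * q < B) (n : ℕ) (hn : n ≠ 0)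
    (h : gN B q n = B) (y : k) (hy : ev y = 0) : dv y ≠ 0 := by
  have hF : Fact q.Prime := ⟨hq⟩
  have hdvd : RZ.map (Int.castRingHom k) ∣ X ^ q ^ n - X := by
    rw [← AdjoinRoot.mk_eq_zero, map_sub, map_pow, AdjoinRoot.mk_X, sub_eq_zero]
    have hnt : Nontrivial (AdjoinRoot (RZ.map (Int.castRingHom k))) := by
      apply AdjoinRoot.nontrivial
      have h32 : (RZ.map (Int.castRingHom k)).natDegree = 32 := by rw [RZ_monic.natDegree_map, RZ_deg]
      intro h0
      rw [natDegree_eq_of_degree_eq_some h0] at h32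
      exact absurd h32 (by norm_num)
    have : CharP (AdjoinRoot (RZ.map (Int.castRingHom k))) q :=
      charP_of_injective_algebraMap (algebraMap k _).injective q
    apply gN_X (B := B) hq hB _ n h
    rw [← aeval_RZ]
    have := AdjoinRoot.eval₂_root (RZ.map (Int.castRingHom k))
    rw [eval₂_map] at this
    rw [aeval_def, ← this]
    congr 1
  have hsep : (RZ.map (Int.castRingHom k)).Separable := by
    refine galois_poly_separable q (q ^ n) (dvd_pow_self q hn) |>.of_dvd hdvd
  intro hd
  have e1 : eval y (RZ.map (Int.castRingHom k)) = 0 := by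
    rw [← hy, ← aeval_RZ, aeval_def, eval_map]; rfl
  have e2 : eval y (derivative (RZ.map (Int.castRingHom k))) = 0 := by
    rw [← hd, ← aeval_RZ', aeval_def, derivative_map, eval_map]; rfl
  obtain ⟨a, b, hab⟩ := hsep
  have := congrArg (eval y) hab
  rw [eval_add, eval_mul, eval_mul, e1, e2] at this
  simp at this

theorem root_in {k : Type*} [Field k] (y : ℕ → k) (hy : ∀ a, a < 32 → ev (y a) = 0)
    (hinj : ∀ a b, a < 32 → b < 32 → y a = y b → a = b) (z : k) (hz : ev z = 0) : ∃ a, a < 32 ∧ y a = z := by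
  by_contra hcon
  push Not at hcon
  have h0 : RZ.map (Int.castRingHom k) = 0 := by
    apply Polynomial.eq_zero_of_natDegree_lt_card_of_eval_eq_zero _
      (f := fun a : Option (Fin 32) => a.elim z (fun a => y a))
    · intro a b hab
      cases a with
      | none => cases b with
        | none => rfl
        | some b => exact absurd hab.symm (hcon b b.2)
      | some a => cases b with
        | none => exact absurd hab (hcon a a.2)
        | some b => exact congrArg some (Fin.ext (hinj a b a.2 b.2 hab))
    · have key : ∀ x : k, ev x = 0 → eval x (RZ.map (Int.castRingHom k)) = 0 := by
        intro x hx
        rw [← hx, ← aeval_RZ, aeval_def, eval_map]; rfl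
      intro a
      cases a with
      | none => exact key _ hz
      | some a => exact key _ (hy a a.2)
    · rw [RZ_monic.natDegree_map, RZ_deg]; simp
  exact (RZ_monic.map (Int.castRingHom k)).ne_zero h0

section
variable {L : Type} [Field L] [Algebra ℚ L] [IsSplittingField ℚ L R]

theorem frob_main (q : ℕ) (hq : q.Prime) (n : ℕ) (hn : n ≠ 0) (B : ℕ) (hB : 33 * q * q < B) (hg : gN B q n = B)
    (r : ℕ → L) (hr : ∀ a, a < 32 → ev (r a) = 0) (hall : ∀ x, ev x = 0 → ∃ a, a < 32 ∧ x = r a)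
    (hinj : ∀ a b, a < 32 → b < 32 → r a = r b → a = b) :
    ∃ σ : L ≃ₐ[ℚ] L, σ ^ n = 1 ∧ (∀ m, gN B q m ≠ B → σ ^ m ≠ 1) ∧
      (∀ z w : ℕ, ev (z : ZMod q) = 0 → ev (w : ZMod q) = 0 → z % q ≠ w % q →
        ∃ a b, a < 32 ∧ b < 32 ∧ a ≠ b ∧ σ (r a) = r a ∧ σ (r b) = r b) := by
  obtain ⟨k, i1, i2, σ, y, hy, hK, hf⟩ := frob_ex q hq r hr hinj
  have hF : Fact q.Prime := ⟨hq⟩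
  have yinj : ∀ a b, a < 32 → b < 32 → y a = y b → a = b := by
    intro a b ha hb hab
    by_contra hne
    have := hK a b ha hb hne
    rw [← hab, KK_diag] at this
    exact dv_sep hq hB n hn hg (y a) (hy a ha) this
  have hσr : ∀ (τ : L ≃ₐ[ℚ] L) a, a < 32 → ∃ b, b < 32 ∧ τ (r a) = r b := by
    intro τ a ha
    apply hall
    have := map_ev (τ : L →+* L) (r a)
    rw [hr a ha, map_zero] at this
    exact this.symm
  have hpow : ∀ m a b, a < 32 → b < 32 → (σ ^ m) (r a) = r b → y b = y a ^ q ^ m := by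
    intro m
    induction m with
    | zero =>
      intro a b ha hb h
      have := hinj a b ha hb h
      simp [this]
    | succ m ih =>
      intro a b ha hb h
      obtain ⟨c, hc, h1⟩ := hσr (σ ^ m) a ha
      rw [pow_succ', AlgEquiv.mul_apply, h1] at h
      rw [hf c b hc hb h, ih a c ha hc h1, pow_succ, pow_mul]
  refine ⟨σ, ?_, ?_, ?_⟩
  · apply fix_one r hall
    intro a ha
    obtain ⟨c, hc, h1⟩ := hσr (σ ^ n) a ha
    have h2 := hpow n a c ha hc h1
    rw [gN_X hq hB (hy a ha) n hg] at h2
    rw [h1, yinj c a hc ha h2]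
  · intro m hm h1
    apply hm
    refine gN_ne hq hB y hy yinj m fun a ha => ?_
    exact (hpow m a a ha ha (by rw [h1]; rfl)).symm
  · have fx : ∀ z : ℕ, ev (z : ZMod q) = 0 → ∃ a, a < 32 ∧ σ (r a) = r a ∧ y a = z := by
      intro z hz
      have hz' : ev (z : k) = 0 := by
        have := map_ev (ZMod.castHom (dvd_refl q) k) (z : ZMod q)
        rw [hz, map_zero, map_natCast] at this
        exact this.symm
      obtain ⟨a, ha, hya⟩ := root_in y hy yinj z hz'
      refine ⟨a, ha, ?_, hya⟩
      obtain ⟨b, hb, h⟩ := hσr σ a ha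
      have h2 := hf a b ha hb h
      rw [hya, ← frobenius_def q, map_natCast, ← hya] at h2
      rw [h, yinj b a hb ha h2]
    intro z w hz hw hzw
    obtain ⟨a, ha, h1, h2⟩ := fx z hz
    obtain ⟨b, hb, h3, h4⟩ := fx w hw
    refine ⟨a, b, ha, hb, ?_, h1, h3⟩
    rintro rfl
    apply hzw
    rw [h2] at h4
    exact (CharP.cast_eq_iff_mod_eq k q).mp h4

theorem chk18 : ev (((18 : ℕ) : ZMod 43)) = 0 := by
  refine ev_gen 33 43 rc _ (fun l => 18 ^ l) (fun l => by push_cast; rfl) ?_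
  decide +kernel
theorem chk29 : ev (((29 : ℕ) : ZMod 43)) = 0 := by
  refine ev_gen 33 43 rc _ (fun l => 29 ^ l) (fun l => by push_cast; rfl) ?_
  decide +kernel

theorem no_root2 : ∀ x : ZMod 2, ev x ≠ 0 := by
  have h0 : (rc 0 : ZMod 2) = 1 := by rw [rc_eq]; rfl
  have h1 : ∑ l ∈ Finset.range 33, (rc l : ZMod 2) = 1 := by
    rw [← Int.cast_sum]
    rw [show ∑ l ∈ Finset.range 33, rc l = ∑ l ∈ Finset.range 33, rcL.getD l 0 from
      Finset.sum_congr rfl fun l _ => rc_eq l]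
    decide +kernel
  intro x
  fin_cases x
  · change ev (0 : ZMod 2) ≠ 0
    rw [ev, Finset.sum_range_succ', Finset.sum_eq_zero]
    · simp [h0]
    · intro l _; simp
  · change ev (1 : ZMod 2) ≠ 0
    rw [ev]
    simp [h1]

theorem no_fix (r : ℕ → L) (hr : ∀ a, a < 32 → ev (r a) = 0) (a : ℕ) (ha : a < 32) :
    ∃ σ : L ≃ₐ[ℚ] L, σ (r a) ≠ r a := by
  by_contra hcon
  push Not at hcon
  have hfd : FiniteDimensional ℚ L := IsSplittingField.finiteDimensional L R
  have hn : Normal ℚ L := Normal.of_isSplittingField R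
  have : IsGalois ℚ L := ⟨⟩
  obtain ⟨c, hc⟩ := (IsGalois.mem_range_algebraMap_iff_fixed (F := ℚ) (r a)).mpr hcon
  have h1 : ev c = 0 := by
    apply (algebraMap ℚ L).injective
    rw [map_ev, hc, hr a ha, map_zero]
  have h2 : IsIntegral ℤ c := ⟨RZ, RZ_monic, by rw [← aeval_def, aeval_RZ, h1]⟩
  obtain ⟨z, rfl⟩ := IsIntegrallyClosed.isIntegral_iff.mp h2
  have h3 : ev z = 0 := by
    apply (algebraMap ℤ ℚ).injective_int
    rw [map_ev, h1, map_zero]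
  have := map_ev (Int.castRingHom (ZMod 2)) z
  rw [h3, map_zero] at this
  exact no_root2 _ this.symm
end

def chF (a b c : Fin 32) : ℕ := chiN a b c

def Good (p : Equiv.Perm (Fin 32)) : Prop := ∃ ε : ℤ, (ε = 1 ∨ ε = -1) ∧ ∀ a b c : Fin 32,
  a ≠ b → a ≠ c → b ≠ c → chiZ (p a) (p b) (p c) = ε * chiZ a b c

def cS (y : ℕ) : ℕ := chiN 31 0 y + 3 * chiN 31 1 y + 9 * chiN 0 1 y
noncomputable def eS (x : ℕ) : ℕ := sumN 32 (fun y => chiN 31 x y * cS y)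
noncomputable def vS (x : ℕ) : ℕ := sumN 32 (fun y => chiN 0 x y * eS y ^ 2)

theorem chk_vS : allN 32 (fun a => allN 32 (fun b => or (Nat.beq a b)
    (not (Nat.beq (vS a) (vS b))))) = true := by decide +kernel

theorem chk_chi0 : allN 32 (fun a => allN 32 (fun b =>
    and (Nat.beq (chiN a a b) 0) (and (Nat.beq (chiN a b a) 0) (Nat.beq (chiN b a a) 0)))) = true := by decide +kernel

theorem chi0 (a b c : Fin 32) (h : a = b ∨ a = c ∨ b = c) : chiN a b c = 0 := by
  have key : ∀ a b : Fin 32, chiN a a b = 0 ∧ chiN a b a = 0 ∧ chiN b a a = 0 := by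
    intro a b
    have := allN_spec _ _ (allN_spec _ _ chk_chi0 a a.2) b b.2
    simp only [Bool.and_eq_true] at this
    exact ⟨Nat.eq_of_beq_eq_true this.1, Nat.eq_of_beq_eq_true this.2.1, Nat.eq_of_beq_eq_true this.2.2⟩
  rcases h with rfl | rfl | rfl
  · exact (key a c).1
  · exact (key a b).2.1
  · exact (key b a).2.2

theorem chi12 (a b c : Fin 32) (hab : a ≠ b) (hac : a ≠ c) (hbc : b ≠ c) : chiN a b c = 1 ∨ chiN a b c = 2 := by
  have h := allN_spec _ _ (allN_spec _ _ (allN_spec _ _ chk_chi a a.2) b b.2) c c.2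
  have h1 : (a : ℕ) ≠ b := fun h => hab (Fin.ext h)
  have h2 : (a : ℕ) ≠ c := fun h => hac (Fin.ext h)
  have h3 : (b : ℕ) ≠ c := fun h => hbc (Fin.ext h)
  simp only [beq_ne h1, beq_ne h2, beq_ne h3, Bool.false_or, Bool.or_eq_true] at h
  exact h.imp Nat.eq_of_beq_eq_true Nat.eq_of_beq_eq_true

theorem sg1 : sg 1 = 1 := rfl
theorem sg2 : sg 2 = -1 := rfl

theorem chi_sg (a b c a' b' c' : Fin 32) (hab : a ≠ b) (hac : a ≠ c) (hbc : b ≠ c)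
    (hab' : a' ≠ b') (hac' : a' ≠ c') (hbc' : b' ≠ c') (h : chiZ a b c = chiZ a' b' c') :
    chiN a b c = chiN a' b' c' := by
  unfold chiZ at h
  rcases chi12 a b c hab hac hbc with h1 | h1 <;> rcases chi12 a' b' c' hab' hac' hbc' with h2 | h2 <;>
    rw [h1, h2] at h ⊢ <;> simp [sg1, sg2] at h

theorem rigid (p : Equiv.Perm (Fin 32)) (hp : Good p) (h31 : p 31 = 31) (h0 : p 0 = 0) (h1 : p 1 = 1) : p = 1 := by
  obtain ⟨ε, hε, hp⟩ := hp
  have hε1 : ε = 1 := by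
    have h := hp 31 0 1 (by decide) (by decide) (by decide)
    rw [h31, h0, h1] at h
    unfold chiZ at h
    rcases hε with rfl | rfl
    · rfl
    · rcases chi12 31 0 1 (by decide) (by decide) (by decide) with h1 | h1 <;> rw [h1] at h <;> simp [sg1, sg2] at h
  subst hε1
  have hN : ∀ a b c : Fin 32, chiN (p a) (p b) (p c) = chiN a b c := by
    intro a b c
    by_cases hd : a = b ∨ a = c ∨ b = c
    · rw [chi0 a b c hd, chi0]
      rcases hd with h | h | h
      · exact Or.inl (congrArg p h)
      · exact Or.inr (Or.inl (congrArg p h))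
      · exact Or.inr (Or.inr (congrArg p h))
    · push Not at hd
      obtain ⟨h1, h2, h3⟩ := hd
      refine chi_sg _ _ _ _ _ _ (fun h => h1 (p.injective h)) (fun h => h2 (p.injective h))
        (fun h => h3 (p.injective h)) h1 h2 h3 ?_
      rw [hp a b c h1 h2 h3, one_mul]
  have hc : ∀ y : Fin 32, cS (p y) = cS y := by
    intro y
    have e1 := hN 31 0 y
    have e2 := hN 31 1 y
    have e3 := hN 0 1 y
    rw [h31, h0] at e1
    rw [h31, h1] at e2
    rw [h0, h1] at e3
    simp only [cS]
    exact congrArg₂ _ (congrArg₂ _ e1 (congrArg _ e2)) (congrArg _ e3)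
  have he : ∀ y : Fin 32, eS (p y) = eS y := by
    intro x
    rw [eS, eS, sumN_eq, sumN_eq, ← Fin.sum_univ_eq_sum_range (fun y => chiN 31 (p x) y * cS y),
      ← Fin.sum_univ_eq_sum_range (fun y => chiN 31 x y * cS y), ← Equiv.sum_comp p]
    refine Finset.sum_congr rfl fun y _ => ?_
    have e1 := hN 31 x y
    rw [h31] at e1
    exact congrArg₂ _ e1 (hc y)
  have hv : ∀ y : Fin 32, vS (p y) = vS y := by
    intro x
    rw [vS, vS, sumN_eq, sumN_eq, ← Fin.sum_univ_eq_sum_range (fun y => chiN 0 (p x) y * eS y ^ 2),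
      ← Fin.sum_univ_eq_sum_range (fun y => chiN 0 x y * eS y ^ 2), ← Equiv.sum_comp p]
    refine Finset.sum_congr rfl fun y _ => ?_
    have e1 := hN 0 x y
    rw [h0] at e1
    exact congrArg₂ _ e1 (congrArg (· ^ 2) (he y))
  ext x
  by_contra hne
  rw [Equiv.Perm.one_apply] at hne
  have h := allN_spec _ _ (allN_spec _ _ chk_vS (p x) (p x).2) x x.2
  rw [beq_ne hne, hv x] at h
  simp at h

theorem Good.mul_inv {p p' : Equiv.Perm (Fin 32)} (h : Good p) (h' : Good p') : Good (p'⁻¹ * p) := by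
  obtain ⟨ε, hε, h⟩ := h
  obtain ⟨ε', hε', h'⟩ := h'
  have hsq : ε' * ε' = 1 := by rcases hε' with rfl | rfl <;> rfl
  refine ⟨ε' * ε, ?_, ?_⟩
  · rcases hε with rfl | rfl <;> rcases hε' with rfl | rfl <;> decide
  · intro a b c hab hac hbc
    have e1 := h a b c hab hac hbc
    have hi := (p'⁻¹ * p).injective
    have e2 := h' ((p'⁻¹ * p) a) ((p'⁻¹ * p) b) ((p'⁻¹ * p) c) (fun h => hab (hi h)) (fun h => hac (hi h))
      (fun h => hbc (hi h))
    have hs : ∀ x, p' ((p'⁻¹ * p) x) = p x := fun x => by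
      rw [← Equiv.Perm.mul_apply, mul_inv_cancel_left]
    rw [hs, hs, hs, e1] at e2
    rw [mul_assoc, e2, ← mul_assoc, hsq, one_mul]

theorem good_card : Nat.card {p : Equiv.Perm (Fin 32) // Good p} ≤ 29760 := by
  have hc : Fintype.card (Fin 3 ↪ Fin 32) = 29760 := by
    rw [Fintype.card_embedding_eq]; simp [Nat.descFactorial]
  rw [← hc, ← Nat.card_eq_fintype_card]
  apply Nat.card_le_card_of_injective
    (fun p : {p : Equiv.Perm (Fin 32) // Good p} =>
      (⟨fun i => p.1 (![31, 0, 1] i), by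
        intro i j hij
        have := p.1.injective hij
        clear hij; revert this; revert i j; decide⟩ : Fin 3 ↪ Fin 32))
  rintro ⟨p, hp⟩ ⟨p', hp'⟩ h
  have h' : ∀ i, p (![31, 0, 1] i) = p' (![31, 0, 1] i) := fun i => DFunLike.congr_fun h i
  have e := rigid (p'⁻¹ * p) (hp.mul_inv hp')
    (by rw [Equiv.Perm.mul_apply, show p 31 = p' 31 from h' 0]; simp)
    (by rw [Equiv.Perm.mul_apply, show p 0 = p' 0 from h' 1]; simp)
    (by rw [Equiv.Perm.mul_apply, show p 1 = p' 1 from h' 2]; simp)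
  apply Subtype.ext
  exact (inv_mul_eq_one.mp e).symm

theorem fact31 : Fact (Nat.Prime 31) := ⟨by norm_num⟩

section glside
attribute [local instance] fact31

def sL (x : ZMod 31) : ℤ := sg (legN x.val)

theorem chk_sL : allN 31 (fun a => allN 31 (fun b =>
    Nat.beq (legN (a * b % 31)) (legN a * legN b % 3))) = true := by decide +kernel
theorem chk_sL1 : allN 31 (fun a => or (Nat.beq a 0) (or (Nat.beq (legN a) 1) (Nat.beq (legN a) 2))) = true := by
  decide +kernel
theorem legN0 : legN 0 = 0 := by decide +kernel

theorem legN_cases (x : ZMod 31) (hx : x ≠ 0) : legN x.val = 1 ∨ legN x.val = 2 := by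
  have h := allN_spec _ _ chk_sL1 x.val (ZMod.val_lt x)
  have h0 : x.val ≠ 0 := fun h => hx ((ZMod.val_eq_zero x).1 h)
  simp only [beq_ne h0, Bool.false_or, Bool.or_eq_true] at h
  exact h.imp Nat.eq_of_beq_eq_true Nat.eq_of_beq_eq_true

theorem sg0 : sg 0 = 0 := rfl

theorem sL0 : sL 0 = 0 := by
  unfold sL; rw [ZMod.val_zero, legN0]; rfl

theorem sL_one_or (x : ZMod 31) (hx : x ≠ 0) : sL x = 1 ∨ sL x = -1 := by
  unfold sL
  rcases legN_cases x hx with h | h <;> rw [h]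
  · exact Or.inl sg1
  · exact Or.inr sg2

theorem sL_mul (x y : ZMod 31) : sL (x * y) = sL x * sL y := by
  by_cases hx : x = 0
  · rw [hx, zero_mul, sL0, zero_mul]
  by_cases hy : y = 0
  · rw [hy, mul_zero, sL0, mul_zero]
  have h := Nat.eq_of_beq_eq_true (allN_spec _ _ (allN_spec _ _ chk_sL x.val (ZMod.val_lt x)) y.val (ZMod.val_lt y))
  unfold sL
  rw [ZMod.val_mul, h]
  rcases legN_cases x hx with h1 | h1 <;> rcases legN_cases y hy with h2 | h2 <;> rw [h1, h2] <;> rfl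

theorem legN_mod (n : ℕ) : legN n = legN (n % 31) := by
  unfold legN; rw [Nat.mod_mod]

theorem sg_legN (n : ℕ) : sg (legN n) = sL (n : ZMod 31) := by
  unfold sL; rw [ZMod.val_natCast, ← legN_mod]

def eP : OnePoint (ZMod 31) ≃ Fin 32 := finSuccEquivLast.symm

theorem eP_infty : eP OnePoint.infty = 31 := rfl
theorem eP_some (x : ZMod 31) : ((eP (x : OnePoint (ZMod 31)) : Fin 32) : ℕ) = x.val := by
  have h : eP (x : OnePoint (ZMod 31)) = Fin.castSucc (n := 31) x := finSuccEquivLast_symm_some (n := 31) x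
  rw [h]; rfl

def rp1 (x : OnePoint (ZMod 31)) : ZMod 31 := Option.elim x 1 id
def rp2 (x : OnePoint (ZMod 31)) : ZMod 31 := Option.elim x 0 (fun _ => 1)

theorem rep1_eP (x : OnePoint (ZMod 31)) : ((rep1 (eP x : Fin 32) : ℕ) : ZMod 31) = rp1 x := by
  induction x using OnePoint.rec with
  | infty => rw [eP_infty]; decide
  | coe x =>
    have : x.val ≠ 31 := (ZMod.val_lt x).ne
    rw [eP_some, rep1, beq_ne this]
    exact ZMod.natCast_zmod_val x

theorem rep2_eP (x : OnePoint (ZMod 31)) : ((rep2 (eP x : Fin 32) : ℕ) : ZMod 31) = rp2 x := by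
  induction x using OnePoint.rec with
  | infty => rw [eP_infty]; decide
  | coe x =>
    have : x.val ≠ 31 := (ZMod.val_lt x).ne
    rw [eP_some, rep2, beq_ne this]
    exact Nat.cast_one

def DD (x y : OnePoint (ZMod 31)) : ZMod 31 := rp1 x * rp2 y - rp1 y * rp2 x

theorem dN_eP (x y : OnePoint (ZMod 31)) :
    ((dN (eP x : Fin 32) (eP y : Fin 32) : ℕ) : ZMod 31) = DD x y := by
  unfold dN DD
  push_cast
  rw [rep1_eP, rep2_eP, rep1_eP, rep2_eP]
  have : (30 : ZMod 31) = -1 := by decide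
  rw [this]; ring

theorem chiZ_eP (x y z : OnePoint (ZMod 31)) :
    chiZ (eP x : Fin 32) (eP y : Fin 32) (eP z : Fin 32) = sL (DD x y * DD y z * DD z x) := by
  unfold chiZ chiN
  rw [sg_legN]
  push_cast
  rw [dN_eP, dN_eP, dN_eP]

theorem smul_rep (g : GL (Fin 2) (ZMod 31)) (x : OnePoint (ZMod 31)) : ∃ l : ZMod 31, l ≠ 0 ∧
    g 0 0 * rp1 x + g 0 1 * rp2 x = l * rp1 (g • x) ∧ g 1 0 * rp1 x + g 1 1 * rp2 x = l * rp2 (g • x) := by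
  have hdet : g 0 0 * g 1 1 - g 0 1 * g 1 0 ≠ 0 := by
    have := g.det_ne_zero
    rwa [Matrix.det_fin_two] at this
  have i1 : rp1 OnePoint.infty = 1 := rfl
  have i2 : rp2 OnePoint.infty = 0 := rfl
  have s1 : ∀ y : ZMod 31, rp1 (y : OnePoint (ZMod 31)) = y := fun _ => rfl
  have s2 : ∀ y : ZMod 31, rp2 (y : OnePoint (ZMod 31)) = 1 := fun _ => rfl
  induction x using OnePoint.rec with
  | infty =>
    rw [OnePoint.smul_infty_eq_ite]
    by_cases h : g 1 0 = 0
    · rw [if_pos h, i1, i2]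
      refine ⟨g 0 0, ?_, by ring, by rw [h]; ring⟩
      rintro h0; apply hdet; rw [h, h0]; ring
    · rw [if_neg h, i1, i2, s1, s2]
      exact ⟨g 1 0, h, by field_simp; ring, by ring⟩
  | coe x =>
    rw [OnePoint.smul_some_eq_ite]
    by_cases h : g 1 0 * x + g 1 1 = 0
    · rw [if_pos h, i1, i2, s1, s2]
      refine ⟨g 0 0 * x + g 0 1, ?_, by ring, by rw [mul_one, h]; ring⟩
      intro h0; apply hdet
      linear_combination g 0 0 * h - g 1 0 * h0
    · rw [if_neg h, s1, s2, s1, s2]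
      exact ⟨g 1 0 * x + g 1 1, h, by rw [mul_one, mul_div_cancel₀ _ h], by ring⟩

noncomputable def piG : GL (Fin 2) (ZMod 31) →* Equiv.Perm (Fin 32) :=
  (eP.permCongrHom : Equiv.Perm (OnePoint (ZMod 31)) ≃* Equiv.Perm (Fin 32)).toMonoidHom.comp
    (MulAction.toPermHom (GL (Fin 2) (ZMod 31)) (OnePoint (ZMod 31)))

theorem piG_eP (g : GL (Fin 2) (ZMod 31)) (x : OnePoint (ZMod 31)) : piG g (eP x) = eP (g • x) := by
  simp [piG]

theorem piG_good (g : GL (Fin 2) (ZMod 31)) : Good (piG g) := by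
  have hdet : g 0 0 * g 1 1 - g 0 1 * g 1 0 ≠ 0 := by
    have := g.det_ne_zero
    rwa [Matrix.det_fin_two] at this
  set d := g 0 0 * g 1 1 - g 0 1 * g 1 0 with hd
  refine ⟨sL d, sL_one_or d hdet, ?_⟩
  intro a b c _ _ _
  obtain ⟨x, rfl⟩ := eP.surjective a
  obtain ⟨y, rfl⟩ := eP.surjective b
  obtain ⟨z, rfl⟩ := eP.surjective c
  rw [piG_eP, piG_eP, piG_eP, chiZ_eP, chiZ_eP]
  have hD : ∀ x y : OnePoint (ZMod 31), ∀ l m : ZMod 31,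
      g 0 0 * rp1 x + g 0 1 * rp2 x = l * rp1 (g • x) → g 1 0 * rp1 x + g 1 1 * rp2 x = l * rp2 (g • x) →
      g 0 0 * rp1 y + g 0 1 * rp2 y = m * rp1 (g • y) → g 1 0 * rp1 y + g 1 1 * rp2 y = m * rp2 (g • y) →
      l * m * DD (g • x) (g • y) = d * DD x y := by
    intro x y l m h1 h2 h3 h4
    have : l * m * DD (g • x) (g • y) = (l * rp1 (g • x)) * (m * rp2 (g • y)) - (m * rp1 (g • y)) * (l * rp2 (g • x)) := by
      unfold DD; ring
    rw [this, ← h1, ← h2, ← h3, ← h4, hd]; unfold DD; ring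
  obtain ⟨l, hl, hl1, hl2⟩ := smul_rep g x
  obtain ⟨m, hm, hm1, hm2⟩ := smul_rep g y
  obtain ⟨n, hn, hn1, hn2⟩ := smul_rep g z
  have e1 := hD x y l m hl1 hl2 hm1 hm2
  have e2 := hD y z m n hm1 hm2 hn1 hn2
  have e3 := hD z x n l hn1 hn2 hl1 hl2
  have key : (l * m * n) * (l * m * n) * (DD (g • x) (g • y) * DD (g • y) (g • z) * DD (g • z) (g • x))
      = d * d * (d * (DD x y * DD y z * DD z x)) := by
    calc _ = (l * m * DD (g • x) (g • y)) * (m * n * DD (g • y) (g • z)) * (n * l * DD (g • z) (g • x)) := by ring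
      _ = _ := by rw [e1, e2, e3]; ring
  have sq : ∀ t : ZMod 31, t ≠ 0 → sL t * sL t = 1 := by
    intro t ht
    rcases sL_one_or t ht with h | h <;> rw [h] <;> rfl
  have := congrArg sL key
  rw [sL_mul _ (DD _ _ * _ * _), sL_mul (l * m * n), sq _ (mul_ne_zero (mul_ne_zero hl hm) hn), sL_mul (d * d), sL_mul d d,
    sq d hdet, one_mul, one_mul, sL_mul d] at this
  exact this

theorem piG_ker : piG.ker = Subgroup.center (GL (Fin 2) (ZMod 31)) := by
  ext g
  rw [MonoidHom.mem_ker, Matrix.GeneralLinearGroup.mem_center_iff_val_mem_range_scalar]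
  constructor
  · intro h
    have hf : ∀ x : OnePoint (ZMod 31), g • x = x := by
      intro x
      apply eP.injective
      rw [← piG_eP, h]; rfl
    have h1 := OnePoint.smul_infty_eq_self_iff.1 (hf OnePoint.infty)
    have hdet : g 0 0 * g 1 1 - g 0 1 * g 1 0 ≠ 0 := by
      have := g.det_ne_zero
      rwa [Matrix.det_fin_two] at this
    rw [h1, mul_zero, sub_zero] at hdet
    have h11 : g 1 1 ≠ 0 := right_ne_zero_of_mul hdet
    have hs : ∀ k : ZMod 31, g 0 0 * k + g 0 1 = k * g 1 1 := by
      intro k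
      have h2 := hf (k : OnePoint (ZMod 31))
      rw [OnePoint.smul_some_eq_ite, h1, zero_mul, zero_add, if_neg h11] at h2
      have h3 := OnePoint.coe_injective h2
      exact (div_eq_iff h11).1 h3
    have e0 := hs 0
    have e1 := hs 1
    rw [mul_zero, zero_add, zero_mul] at e0
    rw [e0, mul_one, one_mul, add_zero] at e1
    refine ⟨g 0 0, ?_⟩
    ext i j
    fin_cases i <;> fin_cases j <;> simp [e0, h1, e1]
  · rintro ⟨a, ha⟩
    have e : ∀ i j, g i j = (Matrix.scalar (Fin 2) a) i j := fun i j => by rw [ha]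
    ext x
    obtain ⟨x, rfl⟩ := eP.surjective x
    rw [piG_eP]
    have h00 : g 0 0 = a := by rw [e]; simp
    have h01 : g 0 1 = 0 := by rw [e]; simp
    have h10 : g 1 0 = 0 := by rw [e]; simp
    have h11 : g 1 1 = a := by rw [e]; simp
    have hdet : g 0 0 * g 1 1 - g 0 1 * g 1 0 ≠ 0 := by
      have := g.det_ne_zero
      rwa [Matrix.det_fin_two] at this
    have ha0 : a ≠ 0 := by
      rintro rfl; apply hdet; rw [h00, h01]; ring
    have : g • x = x := by
      induction x using OnePoint.rec with
      | infty => exact OnePoint.smul_infty_eq_self_iff.2 h10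
      | coe x =>
        rw [OnePoint.smul_some_eq_ite, h10, h11, h00, h01, zero_mul, zero_add, if_neg ha0, add_zero,
          mul_div_cancel_left₀ _ ha0]
    rw [this]; rfl

theorem card_center : Nat.card (Subgroup.center (GL (Fin 2) (ZMod 31))) ≤ 30 := by
  have h2 : Nat.card (Subgroup.center (GL (Fin 2) (ZMod 31))) ≤ Nat.card (ZMod 31)ˣ := by
    rw [Matrix.GeneralLinearGroup.center_eq_range_scalar]
    exact Nat.card_le_card_of_surjective _ (Matrix.GeneralLinearGroup.scalar (R := ZMod 31) (Fin 2)).rangeRestrict_surjective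
  rw [Nat.card_eq_fintype_card (α := (ZMod 31)ˣ), ZMod.card_units] at h2
  exact h2

theorem card_range : 29760 ≤ Nat.card piG.range := by
  have h1 : Nat.card (GL (Fin 2) (ZMod 31)) = 892800 := by
    rw [Matrix.card_GL_field]
    simp [Fin.prod_univ_two, ZMod.card]
  have h2 := Subgroup.card_mul_index piG.ker
  rw [Subgroup.index_ker, h1] at h2
  have h3 : Nat.card piG.ker ≤ 30 := by rw [piG_ker]; exact card_center
  by_contra hlt
  push Not at hlt
  have : Nat.card piG.ker * Nat.card piG.range ≤ 30 * 29759 := Nat.mul_le_mul h3 (by omega)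
  omega

end glside

open Equiv.Perm in
theorem big_sub (H : Subgroup (Equiv.Perm (Fin 32))) (s t : Equiv.Perm (Fin 32)) (hs : s ∈ H) (ht : t ∈ H)
    (os : orderOf s = 30) (ot : orderOf t = 31) (x : Fin 32) (hx : s x = x)
    (hmove : ∀ a : Fin 32, ∃ h ∈ H, h a ≠ a) : 29760 ≤ Nat.card H := by
  have htp : (orderOf t).Prime := by rw [ot]; norm_num
  have hc : t.IsCycle := isCycle_of_prime_order' htp (by rw [ot, Fintype.card_fin]; norm_num)
  have hsup : t.support.card = 31 := by rw [← hc.orderOf, ot]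
  have hcomp : t.supportᶜ.card = 1 := by rw [Finset.card_compl, hsup, Fintype.card_fin]
  obtain ⟨f, hf⟩ := Finset.card_eq_one.1 hcomp
  have hy : ∀ y, y ≠ f → t y ≠ y := by
    intro y hne h
    apply hne
    have : y ∈ t.supportᶜ := by rw [Finset.mem_compl, notMem_support]; exact h
    rw [hf] at this
    exact Finset.mem_singleton.1 this
  have htr : ∀ y, ∃ h ∈ H, h f = y := by
    intro y
    by_cases hyf : y = f
    · exact ⟨1, H.one_mem, hyf.symm⟩
    obtain ⟨h, hh, hne⟩ := hmove f
    obtain ⟨k, hk⟩ := hc.sameCycle (hy _ hne) (hy _ hyf)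
    exact ⟨t ^ k * h, H.mul_mem (H.zpow_mem ht k) hh, hk⟩
  have hpre : MulAction.IsPretransitive H (Fin 32) := by
    refine ⟨fun a b => ?_⟩
    obtain ⟨h1, m1, e1⟩ := htr a
    obtain ⟨h2, m2, e2⟩ := htr b
    refine ⟨⟨h2 * h1⁻¹, H.mul_mem m2 (H.inv_mem m1)⟩, ?_⟩
    change (h2 * h1⁻¹) a = b
    rw [← e1, ← e2]; simp
  have hidx := MulAction.index_stabilizer_of_transitive H x
  have hcard := Subgroup.card_mul_index (MulAction.stabilizer H x)
  rw [hidx, Nat.card_fin] at hcard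
  have d31 : 31 ∣ Nat.card H := by
    have := orderOf_dvd_natCard (⟨t, ht⟩ : H)
    rwa [Subgroup.orderOf_mk, ot] at this
  have d30 : 30 ∣ Nat.card (MulAction.stabilizer H x) := by
    have := orderOf_dvd_natCard (⟨⟨s, hs⟩, hx⟩ : MulAction.stabilizer H x)
    rwa [← Subgroup.orderOf_coe, ← Subgroup.orderOf_coe, os] at this
  have hpos : 0 < Nat.card (MulAction.stabilizer H x) := Nat.card_pos
  omega

theorem range_eq (H : Subgroup (Equiv.Perm (Fin 32))) (hH : ∀ p ∈ H, Good p) (hc : 29760 ≤ Nat.card H) :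
    (H : Set (Equiv.Perm (Fin 32))) = {p | Good p} := by
  apply Set.eq_of_subset_of_ncard_le (fun p hp => hH p hp) _ (Set.toFinite _)
  exact good_card.trans hc

theorem beq_false_ne {a b : ℕ} (h : Nat.beq a b = false) : a ≠ b := Nat.ne_of_beq_eq_false h

theorem ord30 {G : Type} [Group G] (s : G) (h : s ^ 30 = 1) (h1 : s ^ 6 ≠ 1) (h2 : s ^ 10 ≠ 1) (h3 : s ^ 15 ≠ 1) :
    orderOf s = 30 := by
  apply orderOf_eq_of_pow_and_pow_div_prime (by norm_num) h
  intro p hp hd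
  have : p ∈ Nat.primeFactors 30 := Nat.mem_primeFactors.2 ⟨hp, hd, by norm_num⟩
  have h30 : Nat.primeFactors 30 = {2, 3, 5} := by decide +kernel
  rw [h30] at this
  simp only [Finset.mem_insert, Finset.mem_singleton] at this
  rcases this with rfl | rfl | rfl
  · exact h3
  · exact h2
  · exact h1

section fin
variable (L : Type) [Field L] [Algebra ℚ L] [IsSplittingField ℚ L R]

theorem final_gal : Nonempty ((L ≃ₐ[ℚ] L) ≃* GL (Fin 2) (ZMod 31) ⧸ Subgroup.center (GL (Fin 2) (ZMod 31))) := by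
  obtain ⟨r, hr, hall, hinj, hchi⟩ := partA (L := L)
  have hex : ∀ (σ : L ≃ₐ[ℚ] L) (a : Fin 32), ∃ b : Fin 32, σ (r a) = r b := by
    intro σ a
    have h := map_ev (σ : L →+* L) (r a)
    rw [hr a a.2, map_zero] at h
    obtain ⟨b, hb, hb'⟩ := hall _ h.symm
    exact ⟨⟨b, hb⟩, hb'⟩
  choose f hf using hex
  have hi : ∀ a b : Fin 32, r a = r b → a = b := fun a b h => Fin.ext (hinj a b a.2 b.2 h)
  have fmul : ∀ σ τ a, f (σ * τ) a = f σ (f τ a) := by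
    intro σ τ a
    apply hi
    rw [← hf, ← hf, ← hf]; rfl
  have fone : ∀ a, f 1 a = a := by
    intro a
    apply hi
    rw [← hf]; rfl
  let ρ : (L ≃ₐ[ℚ] L) →* Equiv.Perm (Fin 32) :=
    { toFun := fun σ => ⟨f σ, f σ⁻¹, fun a => by rw [← fmul, inv_mul_cancel, fone],
        fun a => by rw [← fmul, mul_inv_cancel, fone]⟩
      map_one' := by ext a; exact congrArg Fin.val (fone a)
      map_mul' := fun σ τ => by ext a; exact congrArg Fin.val (fmul σ τ a) }
  have hρ : ∀ σ (a : Fin 32), σ (r a) = r (ρ σ a : Fin 32) := fun σ a => hf σ a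
  have ρinj : Function.Injective ρ := by
    rw [injective_iff_map_eq_one]
    intro σ hσ
    apply fix_one r hall σ
    intro a ha
    have := hρ σ ⟨a, ha⟩
    rw [hσ] at this
    exact this
  clear_value ρ
  have ρgood : ∀ p ∈ ρ.range, Good p := by
    rintro _ ⟨σ, rfl⟩
    obtain ⟨ε, hε, h⟩ := hchi σ
    refine ⟨ε, hε, fun a b c hab hac hbc => ?_⟩
    exact h a b c _ _ _ a.2 b.2 c.2 (ρ σ a).2 (ρ σ b).2 (ρ σ c).2 (fun h => hab (Fin.ext h))
      (fun h => hac (Fin.ext h)) (fun h => hbc (Fin.ext h)) (hρ σ a) (hρ σ b) (hρ σ c)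
  obtain ⟨s, s1, s2, s3⟩ := frob_main 43 (by norm_num) 30 (by norm_num) 262144 (by norm_num)
    (Nat.eq_of_beq_eq_true chk43) r hr hall hinj
  obtain ⟨t, t1, t2, t3⟩ := frob_main 71 (by norm_num) 31 (by norm_num) 262144 (by norm_num)
    (Nat.eq_of_beq_eq_true chk71) r hr hall hinj
  have os : orderOf s = 30 := ord30 s s1 (s2 6 (beq_false_ne chk43a)) (s2 10 (beq_false_ne chk43b))
    (s2 15 (beq_false_ne chk43c))
  have ot : orderOf t = 31 := by
    have := fact31
    apply orderOf_eq_prime t1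
    have := t2 1 (beq_false_ne chk71a)
    rwa [pow_one] at this
  obtain ⟨a, b, ha, hb, hab, hsa, hsb⟩ := s3 18 29 chk18 chk29 (by norm_num)
  have hcard : 29760 ≤ Nat.card ρ.range := by
    apply big_sub ρ.range (ρ s) (ρ t) ⟨s, rfl⟩ ⟨t, rfl⟩ (by rw [orderOf_injective ρ ρinj, os])
      (by rw [orderOf_injective ρ ρinj, ot]) ⟨a, ha⟩
    · apply hi
      rw [← hρ]; exact hsa
    · intro c
      obtain ⟨σ, hσ⟩ := no_fix r hr c c.2
      refine ⟨ρ σ, ⟨σ, rfl⟩, fun h => hσ ?_⟩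
      rw [hρ, h]
  have h1 := range_eq ρ.range ρgood hcard
  have h2 := range_eq piG.range (by rintro _ ⟨g, rfl⟩; exact piG_good g) card_range
  have h3 : ρ.range = piG.range := SetLike.coe_injective (h1.trans h2.symm)
  exact ⟨((MonoidHom.ofInjective ρinj).trans (MulEquiv.subgroupCongr h3)).trans
    ((QuotientGroup.quotientKerEquivRange piG).symm.trans
      (QuotientGroup.quotientMulEquivOfEq piG_ker))⟩
end fin

theorem galoisGroup_R :
    Nonempty (R.Gal ≃*
      GL (Fin 2) (ZMod 31) ⧸ Subgroup.center (GL (Fin 2) (ZMod 31))) := by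
  exact @final_gal R.SplittingField _ _ (Polynomial.IsSplittingField.splittingField R)
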